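/- arXiv:1504.07594 — 9 statements merged into one kernel-verified Lean document; each statement's English description precedes it below -/
import Mathlib

section
/- There is a bijection between: (1) pairs of natural transformations (δ : F ⟶ F ∘ F, ε : F ⟶ 𝟭) making (F, δ, ε) a comonad on A₁ × ⋯ × Aₙ; and (2) families of natural transformations δ^{ikj} : F_{ij} ⟶ F_{ik} ⋙ F_{kj} (for all 1 ≤ i, j, k ≤ n) and ε^i : F_{ii} ⟶ 𝟭_{A_i} (for all 1 ≤ i ≤ n) such that (a) for all i, j, k, l: (δ^{klj} whiskered with F_{ik}) ∘ δ^{ikj} = (F_{lj} whiskered with δ^{ikl}) ∘ δ^{ilj}, and (b) for all i, j: (ε^j whiskered with F_{ij}) ∘ δ^{ijj} = 𝟙_{F_{ij}} = (F_{ij} whiskered with ε^i) ∘ δ^{iij}. -/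
/-!
STATEMENT 0: Let `A₁, …, Aₙ` be preadditive categories with finite biproducts and
`F_{ij} : A_i ⥤ A_j` additive functors. Let `F` be the induced "matrix" endofunctor
of `A₁ × ⋯ × Aₙ`, with `(F X)_j = ⨁ᵢ F_{ij}(X_i)`.  There is a bijection between
(1) pairs `(δ, ε)` making `(F, δ, ε)` a comonad, and (2) families of natural
transformations `δ^{ikj} : F_{ij} ⟶ F_{ik} ⋙ F_{kj}` and `ε^i : F_{ii} ⟶ 𝟭` which
satisfy the coassociativity squares and counit triangles.
-/

open CategoryTheory Limits

universe v u

variable {n : ℕ} {A : Fin n → Type u} [∀ i, Category.{v} (A i)]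
  [∀ i, Preadditive (A i)] [∀ i, HasFiniteBiproducts (A i)]

/-- The matrix endofunctor of `A₁ × ⋯ × Aₙ` determined by the family `F i j : A i ⥤ A j`:
its `j`-th component at `X` is `⨁ᵢ (F i j).obj (X i)`. -/
noncomputable def matrixFunctor (F : ∀ i j : Fin n, A i ⥤ A j) :
    (∀ i, A i) ⥤ (∀ i, A i) where
  obj X j := ⨁ fun i => (F i j).obj (X i)
  map f j := biproduct.map fun i => (F i j).map (f i)
  map_id X := by
    funext j
    ext i
    simp
  map_comp f g := by
    funext j
    ext i
    simp

/-- Comonad structures on the matrix functor: pairs `(δ, ε)` satisfying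
coassociativity and the two counit laws. -/
noncomputable def ComonadStructures (F : ∀ i j : Fin n, A i ⥤ A j)
    [∀ i j, (F i j).Additive] : Type (max u v) :=
  { de : ((matrixFunctor F ⟶ matrixFunctor F ⋙ matrixFunctor F) ×
        (matrixFunctor F ⟶ 𝟭 (∀ i, A i))) //
    (∀ X, de.1.app X ≫ (matrixFunctor F).map (de.1.app X) =
        de.1.app X ≫ de.1.app ((matrixFunctor F).obj X)) ∧
    (∀ X, de.1.app X ≫ de.2.app ((matrixFunctor F).obj X) = 𝟙 _) ∧
    (∀ X, de.1.app X ≫ (matrixFunctor F).map (de.2.app X) = 𝟙 _) }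

/-- Matrix data: families `δ^{ikj} : F_{ij} ⟶ F_{ik} ⋙ F_{kj}` and `ε^i : F_{ii} ⟶ 𝟭`
satisfying the coassociativity squares (a) and the counit triangles (b). -/
def MatrixStructures (F : ∀ i j : Fin n, A i ⥤ A j) : Type (max u v) :=
  { de : ((∀ i k j : Fin n, F i j ⟶ F i k ⋙ F k j) × (∀ i : Fin n, F i i ⟶ 𝟭 (A i))) //
    (∀ (i j k l : Fin n) (X : A i),
      (de.1 i k j).app X ≫ (de.1 k l j).app ((F i k).obj X) =
        (de.1 i l j).app X ≫ (F l j).map ((de.1 i k l).app X)) ∧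
    (∀ (i j : Fin n) (X : A i),
      (de.1 i j j).app X ≫ (de.2 j).app ((F i j).obj X) = 𝟙 ((F i j).obj X)) ∧
    (∀ (i j : Fin n) (X : A i),
      (de.1 i i j).app X ≫ (F i j).map ((de.2 i).app X) = 𝟙 ((F i j).obj X)) }

namespace MatrixAux

/-- Objects of the product over the index `j`, in explicit form. -/
noncomputable abbrev MObj (F : ∀ i j : Fin n, A i ⥤ A j) (Y : ∀ i, A i) (j : Fin n) : A j :=
  ⨁ fun i => (F i j).obj (Y i)

/-- The explicit component of a comultiplication assembled from a matrix. -/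
noncomputable def dC (F : ∀ i j : Fin n, A i ⥤ A j)
    (d : ∀ i k j : Fin n, F i j ⟶ F i k ⋙ F k j) (Y : ∀ i, A i) (j : Fin n) :
    MObj F Y j ⟶ MObj F (MObj F Y) j :=
  biproduct.desc fun i => biproduct.lift fun k =>
    (d i k j).app (Y i) ≫ (F k j).map (biproduct.ι (fun i => (F i k).obj (Y i)) i)

theorem exists_obj (i : Fin n) (X : A i) : ∃ Y : ∀ j, A j, Y i = X := by
  classical
  exact ⟨Function.update (fun j => (⨁ (fun x : Fin 0 => x.elim0 : Fin 0 → A j))) i X, by simp⟩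

theorem map_ext (F : ∀ i j : Fin n, A i ⥤ A j) [∀ i j, (F i j).Additive]
    {k j : Fin n} {Z : A j} {f : Fin n → A k} {a b : Z ⟶ (F k j).obj (⨁ f)}
    (h : ∀ i, a ≫ (F k j).map (biproduct.π f i) = b ≫ (F k j).map (biproduct.π f i)) : a = b := by
  have key : ∀ c : Z ⟶ (F k j).obj (⨁ f),
      c = ∑ i, (c ≫ (F k j).map (biproduct.π f i)) ≫ (F k j).map (biproduct.ι f i) := by
    intro c
    have h1 : (F k j).map (∑ i, biproduct.π f i ≫ biproduct.ι f i) = 𝟙 _ := by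
      rw [biproduct.total]; exact (F k j).map_id _
    rw [Functor.map_sum] at h1
    conv_lhs => rw [← Category.comp_id c, ← h1, Preadditive.comp_sum]
    simp
  rw [key a, key b]
  simp only [h]

section
variable (F : ∀ i j : Fin n, A i ⥤ A j)
  (d : ∀ i k j : Fin n, F i j ⟶ F i k ⋙ F k j) (Y : ∀ i, A i)

theorem dC_ι_π (i k j : Fin n) :
    biproduct.ι (fun i => (F i j).obj (Y i)) i ≫ dC F d Y j ≫
      biproduct.π (fun k => (F k j).obj (MObj F Y k)) k =
    (d i k j).app (Y i) ≫ (F k j).map (biproduct.ι (fun i => (F i k).obj (Y i)) i) := by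
  simp [dC]

theorem dC_π_π [∀ i j, (F i j).Additive] (i k j : Fin n) :
    dC F d Y j ≫ biproduct.π (fun k => (F k j).obj (MObj F Y k)) k ≫
      (F k j).map (biproduct.π (fun i => (F i k).obj (Y i)) i) =
    biproduct.π (fun i => (F i j).obj (Y i)) i ≫ (d i k j).app (Y i) := by
  apply biproduct.hom_ext'
  intro i'
  have h := dC_ι_π F d Y i' k j
  have h' := congrArg (· ≫ (F k j).map (biproduct.π (fun i => (F i k).obj (Y i)) i)) h
  simp only [Category.assoc] at h'
  rw [h', ← Functor.map_comp]
  by_cases hi : i' = i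
  · subst hi
    simp
  · rw [biproduct.ι_π_ne _ hi, biproduct.ι_π_ne_assoc _ hi]
    simp

theorem dC_ext [∀ i j, (F i j).Additive] {j : Fin n} {Z : A j}
    {a b : Z ⟶ MObj F (MObj F Y) j}
    (h : ∀ k i, a ≫ biproduct.π (fun k => (F k j).obj (MObj F Y k)) k ≫
      (F k j).map (biproduct.π (fun i => (F i k).obj (Y i)) i) =
      b ≫ biproduct.π (fun k => (F k j).obj (MObj F Y k)) k ≫
      (F k j).map (biproduct.π (fun i => (F i k).obj (Y i)) i)) : a = b := by
  apply biproduct.hom_ext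
  intro k
  apply map_ext F
  intro i
  simpa using h k i

theorem dC_nat [∀ i j, (F i j).Additive] {Y Y' : ∀ i, A i} (f : Y ⟶ Y') (j : Fin n) :
    biproduct.map (fun i => (F i j).map (f i)) ≫ dC F d Y' j =
    dC F d Y j ≫ biproduct.map (fun k => (F k j).map (biproduct.map fun i => (F i k).map (f i))) := by
  apply dC_ext
  intro k i
  have h := dC_π_π F d Y i k j
  rw [Category.assoc, dC_π_π, Category.assoc, biproduct.map_π_assoc, biproduct.map_π_assoc,
    ← Functor.map_comp, biproduct.map_π, Functor.map_comp, reassoc_of% h]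
  simp

end

/-- Assembled comultiplication. -/
noncomputable def toδ (F : ∀ i j : Fin n, A i ⥤ A j) [∀ i j, (F i j).Additive]
    (d : ∀ i k j : Fin n, F i j ⟶ F i k ⋙ F k j) :
    matrixFunctor F ⟶ matrixFunctor F ⋙ matrixFunctor F where
  app Y := fun j => dC F d Y j
  naturality Y Y' f := by
    funext j
    exact dC_nat F d f j

/-- Assembled counit. -/
noncomputable def toε (F : ∀ i j : Fin n, A i ⥤ A j)
    (e : ∀ i : Fin n, F i i ⟶ 𝟭 (A i)) :
    matrixFunctor F ⟶ 𝟭 (∀ i, A i) where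
  app Y := fun j => biproduct.π (fun i => (F i j).obj (Y i)) j ≫ (e j).app (Y j)
  naturality Y Y' f := by
    funext j
    change biproduct.map (fun i => (F i j).map (f i)) ≫ biproduct.π _ j ≫ (e j).app (Y' j) =
      (biproduct.π (fun i => (F i j).obj (Y i)) j ≫ (e j).app (Y j)) ≫ f j
    have := (e j).naturality (f j)
    simp only [Functor.id_map] at this
    simp [this]

/-- A transformation natural over the product, between functors depending only on the
`i`-th coordinate, descends to the `i`-th factor. -/
theorem descend {C : Type*} [Category C] (i : Fin n) (G H : A i ⥤ C)
    (t : ∀ Y : ∀ j, A j, G.obj (Y i) ⟶ H.obj (Y i))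
    (ht : ∀ (Y Y' : ∀ j, A j) (f : Y ⟶ Y'), G.map (f i) ≫ t Y' = t Y ≫ H.map (f i)) :
    ∃ s : G ⟶ H, ∀ Y : ∀ j, A j, s.app (Y i) = t Y := by
  classical
  have ht' : ∀ (Y Y' : ∀ j, A j) (g : Y i ⟶ Y' i), G.map g ≫ t Y' = t Y ≫ H.map g := by
    intro Y Y' g
    have := ht Y Y' (Function.update (fun j => (0 : Y j ⟶ Y' j)) i g)
    simpa using this
  choose P hP using exists_obj (A := A) i
  refine ⟨{ app := fun X => G.map (eqToHom (hP X).symm) ≫ t (P X) ≫ H.map (eqToHom (hP X)),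
            naturality := ?_ }, ?_⟩
  · intro X X' f
    have := ht' (P X) (P X') (eqToHom (hP X) ≫ f ≫ eqToHom (hP X').symm)
    have h2 := congrArg (fun m => G.map (eqToHom (hP X).symm) ≫ m ≫ H.map (eqToHom (hP X'))) this
    simp only [Category.assoc, ← Functor.map_comp, ← Functor.map_comp_assoc] at h2
    simpa using h2
  · intro Y
    have := ht' Y (P (Y i)) (eqToHom (hP (Y i)).symm)
    change G.map (eqToHom (hP (Y i)).symm) ≫ t (P (Y i)) ≫ H.map (eqToHom (hP (Y i))) = _
    rw [reassoc_of% this, ← Functor.map_comp]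
    simp

section
variable (F : ∀ i j : Fin n, A i ⥤ A j) [∀ i j, (F i j).Additive]

theorem toδ_bij : Function.Bijective (toδ F) := by
  classical
  constructor
  · intro d d' h
    funext i k j
    ext X
    obtain ⟨Y, rfl⟩ := exists_obj i X
    have h1 : dC F d Y j = dC F d' Y j := congrFun (congrArg (fun t => t.app Y) h) j
    have h2 := dC_π_π F d Y i k j
    rw [h1, dC_π_π] at h2
    have h3 := congrArg (biproduct.ι (fun i => (F i j).obj (Y i)) i ≫ ·) h2
    simpa using h3.symm
  · intro δ
    let D : ∀ (Y : ∀ i, A i) (j : Fin n), MObj F Y j ⟶ MObj F (MObj F Y) j := fun Y j => δ.app Y j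
    have hD : ∀ (Y Y' : ∀ i, A i) (f : Y ⟶ Y') (j : Fin n),
        biproduct.map (fun i => (F i j).map (f i)) ≫ D Y' j = D Y j ≫
          biproduct.map (fun k => (F k j).map (biproduct.map fun i => (F i k).map (f i))) :=
      fun Y Y' f j => congrFun (δ.naturality f) j
    -- naturality of the entries
    have hE : ∀ (Y Y' : ∀ i, A i) (f : Y ⟶ Y') (i i' k j : Fin n),
        (F i j).map (f i) ≫ biproduct.ι (fun i => (F i j).obj (Y' i)) i ≫ D Y' j ≫
          biproduct.π (fun k => (F k j).obj (MObj F Y' k)) k ≫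
          (F k j).map (biproduct.π (fun i => (F i k).obj (Y' i)) i') =
        (biproduct.ι (fun i => (F i j).obj (Y i)) i ≫ D Y j ≫
          biproduct.π (fun k => (F k j).obj (MObj F Y k)) k ≫
          (F k j).map (biproduct.π (fun i => (F i k).obj (Y i)) i')) ≫
          (F k j).map ((F i' k).map (f i')) := by
      intro Y Y' f i i' k j
      have h := hD Y Y' f j
      have h2 := congrArg (fun m => biproduct.ι (fun i => (F i j).obj (Y i)) i ≫ m ≫
          biproduct.π (fun k => (F k j).obj (MObj F Y' k)) k ≫
          (F k j).map (biproduct.π (fun i => (F i k).obj (Y' i)) i')) h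
      simp only [Category.assoc, biproduct.map_π_assoc, biproduct.ι_map_assoc, ← Functor.map_comp,
        biproduct.map_π] at h2
      simpa only [Category.assoc, ← Functor.map_comp] using h2
    have hs : ∀ i k j : Fin n, ∃ s : F i j ⟶ F i k ⋙ F k j, ∀ Y : ∀ j, A j, s.app (Y i) =
        biproduct.ι (fun i => (F i j).obj (Y i)) i ≫ D Y j ≫
          biproduct.π (fun k => (F k j).obj (MObj F Y k)) k ≫
          (F k j).map (biproduct.π (fun i => (F i k).obj (Y i)) i) := by
      intro i k j
      exact descend i (F i j) (F i k ⋙ F k j) _ (fun Y Y' f => hE Y Y' f i i k j)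
    choose d hd using hs
    refine ⟨d, ?_⟩
    ext Y j
    change dC F d Y j = D Y j
    apply dC_ext
    intro k i'
    rw [dC_π_π]
    apply biproduct.hom_ext'
    intro i
    by_cases hi : i = i'
    · subst hi
      rw [biproduct.ι_π_self_assoc, hd]
    · rw [biproduct.ι_π_ne_assoc _ hi, zero_comp]
      have h := hE Y Y (Function.update (fun j => 𝟙 (Y j)) i' 0) i i' k j
      rw [Function.update_self, Function.update_of_ne hi] at h
      simpa using h.symm

theorem toε_bij : Function.Bijective (toε F) := by
  classical
  constructor
  · intro e e' h
    funext i
    ext X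
    obtain ⟨Y, rfl⟩ := exists_obj i X
    have h1 : biproduct.π (fun j => (F j i).obj (Y j)) i ≫ (e i).app (Y i) =
        biproduct.π (fun j => (F j i).obj (Y j)) i ≫ (e' i).app (Y i) :=
      congrFun (congrArg (fun t => t.app Y) h) i
    have h3 := congrArg (biproduct.ι (fun j => (F j i).obj (Y j)) i ≫ ·) h1
    simpa using h3
  · intro ε
    let E : ∀ (Y : ∀ i, A i) (j : Fin n), MObj F Y j ⟶ Y j := fun Y j => ε.app Y j
    have hE : ∀ (Y Y' : ∀ i, A i) (f : Y ⟶ Y') (j : Fin n),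
        biproduct.map (fun i => (F i j).map (f i)) ≫ E Y' j = E Y j ≫ f j :=
      fun Y Y' f j => congrFun (ε.naturality f) j
    have hE' : ∀ (Y Y' : ∀ i, A i) (f : Y ⟶ Y') (i j : Fin n),
        (F i j).map (f i) ≫ biproduct.ι (fun i => (F i j).obj (Y' i)) i ≫ E Y' j =
          (biproduct.ι (fun i => (F i j).obj (Y i)) i ≫ E Y j) ≫ f j := by
      intro Y Y' f i j
      rw [Category.assoc, ← hE, biproduct.ι_map_assoc]
    have hs : ∀ i : Fin n, ∃ s : F i i ⟶ 𝟭 (A i), ∀ Y : ∀ j, A j, s.app (Y i) =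
        biproduct.ι (fun j => (F j i).obj (Y j)) i ≫ E Y i := by
      intro i
      exact descend i (F i i) (𝟭 (A i)) _ (fun Y Y' f => hE' Y Y' f i i)
    choose e he using hs
    refine ⟨e, ?_⟩
    ext Y j
    change biproduct.π (fun i => (F i j).obj (Y i)) j ≫ (e j).app (Y j) = E Y j
    apply biproduct.hom_ext'
    intro i
    by_cases hi : i = j
    · subst hi
      rw [biproduct.ι_π_self_assoc, he]
    · rw [biproduct.ι_π_ne_assoc _ hi, zero_comp]
      have h := hE' Y Y (Function.update (fun j => 𝟙 (Y j)) j 0) i j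
      rw [Function.update_self, Function.update_of_ne hi] at h
      simpa using h.symm

variable (d : ∀ i k j : Fin n, F i j ⟶ F i k ⋙ F k j) (e : ∀ i : Fin n, F i i ⟶ 𝟭 (A i))

theorem coassoc_left (Y : ∀ i, A i) (i j k l : Fin n) :
    biproduct.ι (fun i => (F i j).obj (Y i)) i ≫
      (dC F d Y j ≫ biproduct.map (fun l => (F l j).map (dC F d Y l))) ≫
      biproduct.π (fun l => (F l j).obj (MObj F (MObj F Y) l)) l ≫
      (F l j).map (biproduct.π (fun k => (F k l).obj (MObj F Y k)) k) =
    ((d i l j).app (Y i) ≫ (F l j).map ((d i k l).app (Y i))) ≫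
      (F l j).map ((F k l).map (biproduct.ι (fun i => (F i k).obj (Y i)) i)) := by
  have h := dC_ι_π F d Y i l j
  have h2 := dC_ι_π F d Y i k l
  have h' := congrArg (· ≫ (F l j).map (dC F d Y l ≫
    biproduct.π (fun k => (F k l).obj (MObj F Y k)) k)) h
  simp only [Category.assoc, ← Functor.map_comp, biproduct.map_π_assoc] at h' ⊢
  rw [h', h2]

theorem coassoc_right (Y : ∀ i, A i) (i j k l : Fin n) :
    biproduct.ι (fun i => (F i j).obj (Y i)) i ≫
      (dC F d Y j ≫ dC F d (MObj F Y) j) ≫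
      biproduct.π (fun l => (F l j).obj (MObj F (MObj F Y) l)) l ≫
      (F l j).map (biproduct.π (fun k => (F k l).obj (MObj F Y k)) k) =
    ((d i k j).app (Y i) ≫ (d k l j).app ((F i k).obj (Y i))) ≫
      (F l j).map ((F k l).map (biproduct.ι (fun i => (F i k).obj (Y i)) i)) := by
  have h := dC_π_π F d (MObj F Y) k l j
  have h2 := dC_ι_π F d Y i k j
  have h' := congrArg (· ≫ (d k l j).app (MObj F Y k)) h2
  have hn := (d k l j).naturality (biproduct.ι (fun i => (F i k).obj (Y i)) i)
  simp only [Category.assoc, Functor.comp_map] at h' hn ⊢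
  rw [h, h', hn]

theorem coassoc_iff :
    (∀ X, (toδ F d).app X ≫ (matrixFunctor F).map ((toδ F d).app X) =
        (toδ F d).app X ≫ (toδ F d).app ((matrixFunctor F).obj X)) ↔
    (∀ (i j k l : Fin n) (X : A i),
      (d i k j).app X ≫ (d k l j).app ((F i k).obj X) =
        (d i l j).app X ≫ (F l j).map ((d i k l).app X)) := by
  constructor
  · intro h i j k l X
    obtain ⟨Y, rfl⟩ := exists_obj i X
    have h1 : dC F d Y j ≫ biproduct.map (fun l => (F l j).map (dC F d Y l)) =
      dC F d Y j ≫ dC F d (MObj F Y) j := congrFun (h Y) j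
    have h2 := coassoc_left F d Y i j k l
    rw [h1, coassoc_right] at h2
    have h3 := congrArg (· ≫ (F l j).map ((F k l).map
      (biproduct.π (fun i => (F i k).obj (Y i)) i))) h2
    simp only [Category.assoc, ← Functor.map_comp, biproduct.ι_π_self] at h3
    simpa using h3
  · intro h Y
    funext j
    change dC F d Y j ≫ biproduct.map (fun l => (F l j).map (dC F d Y l)) =
      dC F d Y j ≫ dC F d (MObj F Y) j
    apply biproduct.hom_ext'
    intro i
    apply dC_ext
    intro l k
    have h2 := coassoc_left F d Y i j k l
    rw [← h, ← coassoc_right] at h2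
    simpa only [Category.assoc] using h2

theorem counit_left_iff :
    (∀ X, (toδ F d).app X ≫ (toε F e).app ((matrixFunctor F).obj X) = 𝟙 _) ↔
    (∀ (i j : Fin n) (X : A i),
      (d i j j).app X ≫ (e j).app ((F i j).obj X) = 𝟙 ((F i j).obj X)) := by
  have key : ∀ (Y : ∀ i, A i) (i j : Fin n), biproduct.ι (fun i => (F i j).obj (Y i)) i ≫
      dC F d Y j ≫ biproduct.π (fun i => (F i j).obj (MObj F Y i)) j ≫ (e j).app (MObj F Y j) =
      ((d i j j).app (Y i) ≫ (e j).app ((F i j).obj (Y i))) ≫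
        biproduct.ι (fun i => (F i j).obj (Y i)) i := by
    intro Y i j
    have h := congrArg (· ≫ (e j).app (MObj F Y j)) (dC_ι_π F d Y i j j)
    have hn := (e j).naturality (biproduct.ι (fun i => (F i j).obj (Y i)) i)
    simp only [Category.assoc, Functor.id_map] at h hn ⊢
    rw [h, hn]
  constructor
  · intro h i j X
    obtain ⟨Y, rfl⟩ := exists_obj i X
    have h1 : dC F d Y j ≫ biproduct.π (fun i => (F i j).obj (MObj F Y i)) j ≫
      (e j).app (MObj F Y j) = 𝟙 (MObj F Y j) := congrFun (h Y) j
    have h2 := key Y i j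
    rw [h1] at h2
    have h3 := congrArg (· ≫ biproduct.π (fun i => (F i j).obj (Y i)) i) h2
    simpa using h3.symm
  · intro h Y
    funext j
    change dC F d Y j ≫ biproduct.π (fun i => (F i j).obj (MObj F Y i)) j ≫
      (e j).app (MObj F Y j) = 𝟙 (MObj F Y j)
    apply biproduct.hom_ext'
    intro i
    rw [key, h, Category.id_comp, Category.comp_id]

/-- The explicit component of the assembled counit. -/
noncomputable def eC (F : ∀ i j : Fin n, A i ⥤ A j) (e : ∀ i : Fin n, F i i ⟶ 𝟭 (A i))
    (Y : ∀ i, A i) (k : Fin n) : MObj F Y k ⟶ Y k :=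
  biproduct.π (fun i => (F i k).obj (Y i)) k ≫ (e k).app (Y k)

theorem counit_right_iff :
    (∀ X, (toδ F d).app X ≫ (matrixFunctor F).map ((toε F e).app X) = 𝟙 _) ↔
    (∀ (i j : Fin n) (X : A i),
      (d i i j).app X ≫ (F i j).map ((e i).app X) = 𝟙 ((F i j).obj X)) := by
  have key : ∀ (Y : ∀ i, A i) (i k j : Fin n), biproduct.ι (fun i => (F i j).obj (Y i)) i ≫
      (dC F d Y j ≫ biproduct.map (fun k => (F k j).map
        (eC F e Y k))) ≫
        biproduct.π (fun i => (F i j).obj (Y i)) k =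
      (d i k j).app (Y i) ≫ (F k j).map (biproduct.ι (fun i => (F i k).obj (Y i)) i ≫
        eC F e Y k) := by
    intro Y i k j
    have h := congrArg (· ≫ (F k j).map
        (eC F e Y k)) (dC_ι_π F d Y i k j)
    simp only [Category.assoc, biproduct.map_π, ← Functor.map_comp] at h ⊢
    exact h
  constructor
  · intro h i j X
    obtain ⟨Y, rfl⟩ := exists_obj i X
    have h1 : dC F d Y j ≫ biproduct.map (fun k => (F k j).map
        (eC F e Y k)) = 𝟙 (MObj F Y j) :=
      congrFun (h Y) j
    have h2 := key Y i i j
    rw [h1, eC, biproduct.ι_π_self_assoc] at h2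
    simpa using h2.symm
  · intro h Y
    funext j
    change dC F d Y j ≫ biproduct.map (fun k => (F k j).map
        (eC F e Y k)) = 𝟙 (MObj F Y j)
    apply biproduct.hom_ext'
    intro i
    apply biproduct.hom_ext
    intro k
    rw [Category.assoc, key]
    by_cases hi : i = k
    · subst hi
      rw [eC, biproduct.ι_π_self_assoc, h]
      simp
    · rw [eC, biproduct.ι_π_ne_assoc _ hi]
      simp [biproduct.ι_π_ne _ hi]

end

end MatrixAux

theorem stmt_0 (F : ∀ i j : Fin n, A i ⥤ A j) [∀ i j, (F i j).Additive] :
    Nonempty (ComonadStructures F ≃ MatrixStructures F) := by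
  exact ⟨(Equiv.subtypeEquiv
    ((Equiv.ofBijective _ (MatrixAux.toδ_bij F)).prodCongr
      (Equiv.ofBijective _ (MatrixAux.toε_bij F)))
    (fun de => and_congr (MatrixAux.coassoc_iff F de.1).symm
      (and_congr (MatrixAux.counit_left_iff F de.1 de.2).symm
        (MatrixAux.counit_right_iff F de.1 de.2).symm))).symm⟩
end

section
/- The category X whose objects are tuples ((C, d_C) ∈ C_R, (D, d_D) ∈ D_S, f : D ⟶ V(C)) satisfying ρ_C ∘ f = V(d_C) ∘ f and λ_C ∘ f = S(f) ∘ d_D, and whose morphisms are pairs of comodule morphisms (g : (C,d_C) ⟶ (C',d_{C'}), h : (D,d_D) ⟶ (D',d_{D'})) with f' ∘ h = V(g) ∘ f (this is the category of comodules over the triangular matrix comonad with diagonal entries R, S and lower-left entry V on C × D), is equivalent to the comma category Comma(𝟭_{D_S}, T), whose objects are triples ((C,d_C) ∈ C_R, (D,d_D) ∈ D_S, g : (D,d_D) ⟶ T(C,d_C)). -/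
/-!
STATEMENT 2: With `R`, `S`, `V`, `ρ`, `λ` as in the triangular matrix comonad
situation, and `T : C_R ⥤ D_S` the functor built from the equalizers, the category of
comodules over the triangular matrix comonad `[[R, 0], [V, S]]` — whose objects are
triples `((C,d_C), (D,d_D), f : D ⟶ V C)` with `f ≫ ρ_C = f ≫ V(d_C)` and
`f ≫ λ_C = d_D ≫ S(f)`, and whose morphisms are pairs of comodule morphisms
compatible with `f` — is equivalent to the comma category `Comma(𝟭_{D_S}, T)`.
-/

open CategoryTheory Limits

universe v₁ v₂ u₁ u₂

variable {C : Type u₁} [Category.{v₁} C] {D : Type u₂} [Category.{v₂} D]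
variable (R : Comonad C) (S : Comonad D) (V : C ⥤ D)
variable (ρ : V ⟶ (R : C ⥤ C) ⋙ V) (lam : V ⟶ V ⋙ (S : D ⥤ D))

/-- An object of the category of comodules over the triangular matrix comonad
`[[R, 0], [V, S]]`: an `R`-comodule `(C, d_C)`, an `S`-comodule `(D, d_D)` and a
morphism `f : D ⟶ V(C)` such that `f ≫ ρ_C = f ≫ V(d_C)` and `f ≫ λ_C = d_D ≫ S(f)`. -/
structure TriangularComodule where
  c : R.Coalgebra
  d : S.Coalgebra
  f : d.A ⟶ V.obj c.A
  compat_ρ : f ≫ ρ.app c.A = f ≫ V.map c.a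
  compat_lam : f ≫ lam.app c.A = d.a ≫ (S : D ⥤ D).map f

/-- A morphism of comodules over the triangular matrix comonad: a pair of comodule
morphisms compatible with the connecting morphisms. -/
@[ext]
structure TriangularComoduleHom (M N : TriangularComodule R S V ρ lam) where
  g : M.c ⟶ N.c
  h : M.d ⟶ N.d
  compat : h.f ≫ N.f = M.f ≫ V.map g.f

instance : Category (TriangularComodule R S V ρ lam) where
  Hom M N := TriangularComoduleHom R S V ρ lam M N
  id M := ⟨𝟙 M.c, 𝟙 M.d, by simp⟩
  comp f g := ⟨f.g ≫ g.g, f.h ≫ g.h, by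
    simp only [Comonad.Coalgebra.comp_f, Category.assoc, Functor.map_comp]
    rw [g.compat, ← Category.assoc, f.compat, Category.assoc]⟩
  id_comp f := by apply TriangularComoduleHom.ext <;> simp
  comp_id f := by apply TriangularComoduleHom.ext <;> simp
  assoc f g h := by apply TriangularComoduleHom.ext <;> simp

theorem stmt_2
    (hρ : ∀ X : C, ρ.app X ≫ V.map (R.δ.app X) = ρ.app X ≫ ρ.app ((R : C ⥤ C).obj X))
    (hlam : ∀ X : C, lam.app X ≫ S.δ.app (V.obj X) =
      lam.app X ≫ (S : D ⥤ D).map (lam.app X))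
    (hcounitS : ∀ X : C, lam.app X ≫ S.ε.app (V.obj X) = 𝟙 (V.obj X))
    (hcounitR : ∀ X : C, ρ.app X ≫ V.map (R.ε.app X) = 𝟙 (V.obj X))
    (hcomm : ∀ X : C, lam.app X ≫ (S : D ⥤ D).map (ρ.app X) =
      ρ.app X ≫ lam.app ((R : C ⥤ C).obj X))
    (heq : ∀ X : R.Coalgebra, HasEqualizer (ρ.app X.A) (V.map X.a))
    (hpres : ∀ X : R.Coalgebra,
      PreservesLimit (parallelPair (ρ.app X.A) (V.map X.a)) (S : D ⥤ D))
    -- `T` is the functor whose value at `(C, d_C)` is the equalizer of `ρ_C` and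
    -- `V(d_C)`, with `S`-coaction induced by `λ`, and whose action on morphisms is
    -- induced by the universal property of the equalizer:
    (T : R.Coalgebra ⥤ S.Coalgebra)
    (e : ∀ X : R.Coalgebra, (T.obj X).A ⟶ V.obj X.A)
    (hw : ∀ X : R.Coalgebra, e X ≫ ρ.app X.A = e X ≫ V.map X.a)
    (hlim : ∀ X : R.Coalgebra, Nonempty (IsLimit (Fork.ofι (e X) (hw X))))
    (hcoact : ∀ X : R.Coalgebra,
      (T.obj X).a ≫ (S : D ⥤ D).map (e X) = e X ≫ lam.app X.A)
    (hnat : ∀ (X Y : R.Coalgebra) (g : X ⟶ Y),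
      (T.map g).f ≫ e Y = e X ≫ V.map g.f) :
    Nonempty (TriangularComodule R S V ρ lam ≌ Comma (𝟭 S.Coalgebra) T) := by
  have hmono : ∀ X : R.Coalgebra, ∀ {Z : D} (a b : Z ⟶ (T.obj X).A),
      a ≫ e X = b ≫ e X → a = b := by
    intro X Z a b hab
    obtain ⟨hl⟩ := hlim X
    exact Fork.IsLimit.hom_ext hl hab
  have hSmono : ∀ X : R.Coalgebra, ∀ {Z : D} (a b : Z ⟶ (S : D ⥤ D).obj (T.obj X).A),
      a ≫ (S : D ⥤ D).map (e X) = b ≫ (S : D ⥤ D).map (e X) → a = b := by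
    intro X Z a b hab
    obtain ⟨hl⟩ := hlim X
    have := hpres X
    exact Fork.IsLimit.hom_ext (isLimitForkMapOfIsLimit (S : D ⥤ D) (hw X) hl) hab
  let F : Comma (𝟭 S.Coalgebra) T ⥤ TriangularComodule R S V ρ lam :=
    { obj := fun X => ⟨X.right, X.left, X.hom.f ≫ e X.right,
        by rw [Category.assoc, hw, Category.assoc],
        by
          have h1 := X.hom.h
          dsimp at h1
          rw [Category.assoc, ← hcoact, Functor.map_comp, ← Category.assoc, ← h1,
            Category.assoc]⟩
      map := fun {X Y} m => ⟨m.right, m.left, by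
        have h1 := congrArg Comonad.Coalgebra.Hom.f m.w
        dsimp at h1
        dsimp
        rw [← Category.assoc, h1, Category.assoc, hnat, Category.assoc]⟩
      map_id := fun X => rfl
      map_comp := fun f g => rfl }
  have hfaith : F.Faithful := ⟨fun {X Y} a b hab => by
    apply CommaMorphism.ext
    · exact congrArg TriangularComoduleHom.h hab
    · exact congrArg TriangularComoduleHom.g hab⟩
  have hfull : F.Full := ⟨fun {X Y} m => by
    refine ⟨{ left := m.h, right := m.g, w := ?_ }, rfl⟩
    apply Comonad.Coalgebra.Hom.ext
    apply hmono
    have h1 := m.compat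
    dsimp [F] at h1
    dsimp
    rw [Category.assoc, Category.assoc, hnat]
    simpa using h1⟩
  have hess : F.EssSurj := ⟨fun M => by
    obtain ⟨hl⟩ := hlim M.c
    let k : M.d.A ⟶ (T.obj M.c).A := Fork.IsLimit.lift hl M.f M.compat_ρ
    have hk : k ≫ e M.c = M.f := Fork.IsLimit.lift_ι' hl M.f M.compat_ρ
    let κ : M.d ⟶ T.obj M.c := ⟨k, by
      apply hSmono
      rw [Category.assoc, Category.assoc, hcoact, ← Functor.map_comp, hk,
        ← Category.assoc, hk, M.compat_lam]⟩
    let X : Comma (𝟭 S.Coalgebra) T := { left := M.d, right := M.c, hom := κ }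
    have hX : (F.obj X).f = M.f := hk
    exact ⟨X, ⟨{
      hom := ⟨𝟙 M.c, 𝟙 M.d, by
        rw [hX]
        simp [F, X]⟩
      inv := ⟨𝟙 M.c, 𝟙 M.d, by
        rw [hX]
        simp [F, X]⟩
      hom_inv_id := TriangularComoduleHom.ext (Category.comp_id _) (Category.comp_id _)
      inv_hom_id := TriangularComoduleHom.ext (Category.comp_id _) (Category.comp_id _) }⟩⟩⟩
  have : F.IsEquivalence := { }
  exact ⟨F.asEquivalence.symm⟩
end

section
/- If F₁₂ moreover preserves injective objects (it sends every injective object of A₁ to an injective object of A₂), then the comma category K = Comma(𝟭_{A₂}, F₁₂) has enough injectives. -/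
/-!
STATEMENT 3: If `F₁₂` preserves injective objects, then the comma category
`K = Comma(𝟭 A₂, F₁₂)` (the category of comodules over the normal triangular 2×2
matrix comonad determined by `F₁₂`) has enough injectives.
-/

open CategoryTheory Limits

universe v₁ v₂ u₁ u₂

open ZeroObject in
/-- A monomorphism in the comma category has a monomorphism as its right component. -/
lemma comma_mono_right {A₁ : Type u₁} [Category.{v₁} A₁] {A₂ : Type u₂} [Category.{v₂} A₂]
    [Abelian A₂] (F : A₁ ⥤ A₂) {X Y : Comma (𝟭 A₂) F} (f : X ⟶ Y) [Mono f] :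
    Mono f.right := by
  constructor
  intro W a b hab
  let Z : Comma (𝟭 A₂) F := { left := (0 : A₂), right := W, hom := (0 : (0 : A₂) ⟶ F.obj W) }
  let mapA : Z ⟶ X :=
    { left := (0 : (0 : A₂) ⟶ X.left), right := a, w := (isZero_zero A₂).eq_of_src _ _ }
  let mapB : Z ⟶ X :=
    { left := (0 : (0 : A₂) ⟶ X.left), right := b, w := (isZero_zero A₂).eq_of_src _ _ }
  have h : mapA = mapB := by
    rw [← cancel_mono f]
    exact CommaMorphism.ext rfl hab
  exact congrArg CommaMorphism.right h

/-- A monomorphism in the comma category has a monomorphism as its left component. -/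
lemma comma_mono_left {A₁ : Type u₁} [Category.{v₁} A₁] [Abelian A₁]
    {A₂ : Type u₂} [Category.{v₂} A₂]
    [Abelian A₂] (F : A₁ ⥤ A₂) [PreservesFiniteLimits F]
    {X Y : Comma (𝟭 A₂) F} (f : X ⟶ Y) [Mono f] :
    Mono f.left := by
  have : Mono f.right := comma_mono_right F f
  constructor
  intro W a b hab
  have hw : f.left ≫ Y.hom = X.hom ≫ F.map f.right := f.w
  have hd : (a ≫ X.hom : W ⟶ F.obj X.right) = b ≫ X.hom := by
    rw [← cancel_mono (F.map f.right)]
    have e1 : (a ≫ X.hom) ≫ F.map f.right = (a ≫ f.left) ≫ Y.hom := by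
      rw [Category.assoc, ← hw, ← Category.assoc]
    have e2 : (b ≫ X.hom) ≫ F.map f.right = (b ≫ f.left) ≫ Y.hom := by
      rw [Category.assoc, ← hw, ← Category.assoc]
    exact e1.trans ((congrArg (fun t => t ≫ Y.hom) hab).trans e2.symm)
  let Z : Comma (𝟭 A₂) F :=
    { left := W, right := X.right, hom := (a ≫ X.hom : W ⟶ F.obj X.right) }
  let mapA : Z ⟶ X := { left := a, right := 𝟙 _, w := by simp [Z] }
  let mapB : Z ⟶ X := { left := b, right := 𝟙 _, w := by simp [Z]; exact hd.symm }
  have h : mapA = mapB := by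
    rw [← cancel_mono f]
    exact CommaMorphism.ext hab rfl
  exact congrArg CommaMorphism.left h

/-- The cofree object on a pair of injectives is injective. -/
lemma comma_injective {A₁ : Type u₁} [Category.{v₁} A₁] [Abelian A₁]
    {A₂ : Type u₂} [Category.{v₂} A₂]
    [Abelian A₂] (F : A₁ ⥤ A₂) [PreservesFiniteLimits F]
    (E : A₁) (I : A₂) [Injective E] [Injective I] :
    Injective ({ left := I ⊞ F.obj E, right := E, hom := biprod.snd } : Comma (𝟭 A₂) F) := by
  constructor
  intro X Y g f _
  have := comma_mono_right F f
  have := comma_mono_left F f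
  have hw : f.left ≫ Y.hom = X.hom ≫ F.map f.right := f.w
  have gw : g.left ≫ biprod.snd = X.hom ≫ F.map g.right := g.w
  let r : Y.right ⟶ E := Injective.factorThru g.right f.right
  let l : Y.left ⟶ I := Injective.factorThru (g.left ≫ biprod.fst) f.left
  have hr : f.right ≫ r = g.right := Injective.comp_factorThru _ _
  have hl : f.left ≫ l = g.left ≫ biprod.fst := Injective.comp_factorThru _ _
  refine ⟨{ left := biprod.lift l (Y.hom ≫ F.map r), right := r, w := ?_ }, ?_⟩
  · exact biprod.lift_snd _ _
  · refine CommaMorphism.ext ?_ hr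
    change f.left ≫ biprod.lift l (Y.hom ≫ F.map r) = g.left
    apply biprod.hom_ext
    · rw [Category.assoc, biprod.lift_fst, hl]
    · rw [Category.assoc, biprod.lift_snd, gw, ← hr, F.map_comp, ← Category.assoc, hw,
        Category.assoc]

theorem stmt_3 {A₁ : Type u₁} [Category.{v₁} A₁] [Abelian A₁] [EnoughInjectives A₁]
    {A₂ : Type u₂} [Category.{v₂} A₂] [Abelian A₂] [EnoughInjectives A₂]
    (F : A₁ ⥤ A₂) [F.Additive] [PreservesFiniteLimits F]
    (hF : ∀ E : A₁, Injective E → Injective (F.obj E)) :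
    EnoughInjectives (Comma (𝟭 A₂) F) := by
  constructor
  intro X
  let r : X.right ⟶ Injective.under X.right := Injective.ι X.right
  let l : X.left ⟶ Injective.under X.left := Injective.ι X.left
  let J : Comma (𝟭 A₂) F :=
    { left := Injective.under X.left ⊞ F.obj (Injective.under X.right)
      right := Injective.under X.right
      hom := biprod.snd }
  let φ : X ⟶ J :=
    { left := biprod.lift l (X.hom ≫ F.map r), right := r, w := biprod.lift_snd _ _ }
  refine ⟨{ J := J, injective := comma_injective F _ _, f := φ, mono := ⟨?_⟩ }⟩
  intro Z a b hab
  have h1 : a.right ≫ r = b.right ≫ r := congrArg CommaMorphism.right hab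
  have h2 : a.left ≫ biprod.lift l (X.hom ≫ F.map r) =
      b.left ≫ biprod.lift l (X.hom ≫ F.map r) := congrArg CommaMorphism.left hab
  have h3 : a.left ≫ l = b.left ≫ l := by
    have := congrArg (fun t => t ≫ biprod.fst) h2
    simpa only [Category.assoc, biprod.lift_fst] using this
  exact CommaMorphism.ext ((cancel_mono l).1 h3) ((cancel_mono r).1 h1)
end

section
/- Assume F₁₂ preserves injective objects. If X = (X₂, X₁, d_X) is an injective object of the comma category K = Comma(𝟭_{A₂}, F₁₂), then X₁ is injective in A₁, X₂ is injective in A₂, the morphism d_X : X₂ ⟶ F₁₂(X₁) is a split epimorphism, and there exist injective objects E₁ ∈ A₁ and E₂ ∈ A₂ together with an isomorphism X ≅ G(E₁, E₂) in K. -/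
/-!
STATEMENT 4: Assume `F₁₂` preserves injective objects. If `X = (X₂, X₁, d_X)` is an
injective object of the comma category `K = Comma(𝟭 A₂, F₁₂)`, then `X₁` is injective
in `A₁`, `X₂` is injective in `A₂`, `d_X` is a split epimorphism, and `X ≅ G(E₁, E₂)`
for some injective objects `E₁ ∈ A₁`, `E₂ ∈ A₂`, where `G(E₁,E₂) = (F₁₂E₁ ⊞ E₂, E₁, π)`
is the cofree comodule.
-/

open CategoryTheory Limits

universe v₁ v₂ u₁ u₂

variable {A₁ : Type u₁} [Category.{v₁} A₁] [Abelian A₁] [EnoughInjectives A₁]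
variable {A₂ : Type u₂} [Category.{v₂} A₂] [Abelian A₂] [EnoughInjectives A₂]
variable (F : A₁ ⥤ A₂)

/-- The cofree comodule `G(E₁, E₂) = (F₁₂(E₁) ⊞ E₂, E₁, π)`, where `π` is the
biproduct projection onto `F₁₂(E₁)`. -/
noncomputable def cofreeComodule (E₁ : A₁) (E₂ : A₂) : Comma (𝟭 A₂) F where
  left := F.obj E₁ ⊞ E₂
  right := E₁
  hom := biprod.fst

theorem stmt_4 [F.Additive] [PreservesFiniteLimits F]
    (hF : ∀ E : A₁, Injective E → Injective (F.obj E))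
    (X : Comma (𝟭 A₂) F) (hX : Injective X) :
    Injective X.right ∧ Injective X.left ∧ IsSplitEpi X.hom ∧
      ∃ (E₁ : A₁) (E₂ : A₂), Injective E₁ ∧ Injective E₂ ∧
        Nonempty (X ≅ cofreeComodule F E₁ E₂) := by
  have := hX
  let j : X ⟶ cofreeComodule F (Injective.under X.right) (Injective.under X.left) :=
    { left := biprod.lift (X.hom ≫ F.map (Injective.ι X.right)) (Injective.ι X.left)
      right := Injective.ι X.right
      w := by simp [cofreeComodule] }
  have : Mono j := by
    constructor
    intro Z g h e
    have el : g.left ≫ (biprod.lift (X.hom ≫ F.map (Injective.ι X.right)) (Injective.ι X.left) :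
        X.left ⟶ F.obj (Injective.under X.right) ⊞ Injective.under X.left) = h.left ≫
        biprod.lift (X.hom ≫ F.map (Injective.ι X.right)) (Injective.ι X.left) :=
      congrArg CommaMorphism.left e
    have er : g.right ≫ j.right = h.right ≫ j.right := congrArg CommaMorphism.right e
    have e2 : g.left ≫ Injective.ι X.left = h.left ≫ Injective.ι X.left := by
      have := congrArg (fun t => t ≫ (biprod.snd :
        F.obj (Injective.under X.right) ⊞ Injective.under X.left ⟶ _)) el
      simpa only [Category.assoc, biprod.lift_snd] using this
    apply CommaMorphism.ext
    · exact (cancel_mono _).1 e2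
    · exact (cancel_mono (Injective.ι X.right)).1 er
  let r := Injective.factorThru (𝟙 X) j
  have hr : j ≫ r = 𝟙 X := Injective.comp_factorThru _ _
  have hl : j.left ≫ r.left = 𝟙 X.left := congrArg CommaMorphism.left hr
  obtain ⟨rr, hrr, rl, w⟩ : ∃ rr : Injective.under X.right ⟶ X.right,
      Injective.ι X.right ≫ rr = 𝟙 X.right ∧
      ∃ rl : F.obj (Injective.under X.right) ⊞ Injective.under X.left ⟶ X.left,
        rl ≫ (X.hom : X.left ⟶ F.obj X.right) = biprod.fst ≫ F.map rr :=
    ⟨r.right, congrArg CommaMorphism.right hr, r.left, r.w⟩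
  have key : ∀ {C : Type _} [Category C] (A B : C) (i : A ⟶ B) (p : B ⟶ A),
      i ≫ p = 𝟙 A → Injective B → Injective A := by
    intro C _ A B i p h hB
    constructor
    intro Y Z g f _
    exact ⟨Injective.factorThru (g ≫ i) f ≫ p, by simp [h]⟩
  have key2 : ∀ {C : Type _} [Category C] (A B : C) (i : A ⟶ B) (p : B ⟶ A),
      i ≫ p = 𝟙 A → Injective B → Injective A := by
    intro C _ A B i p h hB
    constructor
    intro Y Z g f _
    exact ⟨Injective.factorThru (g ≫ i) f ≫ p, by simp [h]⟩
  have h1 : Injective X.right := key _ _ _ _ hrr inferInstance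
  have := hF _ (inferInstance : Injective (Injective.under X.right))
  have h2 : Injective X.left := key2 _ _ _ _ hl
    (inferInstanceAs (Injective (F.obj (Injective.under X.right) ⊞ Injective.under X.left)))
  let d : X.left ⟶ F.obj X.right := X.hom
  let s : F.obj X.right ⟶ X.left := F.map (Injective.ι X.right) ≫
    (biprod.inl : _ ⟶ F.obj (Injective.under X.right) ⊞ Injective.under X.left) ≫ rl
  have hs : s ≫ d = 𝟙 _ := by
    have : F.map (Injective.ι X.right) ≫ F.map rr = 𝟙 _ := by
      rw [← F.map_comp, hrr, F.map_id]
    simp only [s, d, Category.assoc]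
    rw [w, biprod.inl_fst_assoc, this]
  let q : X.left ⟶ kernel d := kernel.lift d (𝟙 _ - d ≫ s) (by simp [hs])
  have hq : q ≫ kernel.ι d = 𝟙 _ - d ≫ s := kernel.lift_ι _ _ _
  have hkq : kernel.ι d ≫ q = 𝟙 _ := by
    rw [← cancel_mono (kernel.ι d), Category.assoc, hq]; simp
  have hsds : s ≫ d ≫ s = s := by rw [← Category.assoc, hs, Category.id_comp]
  have hsq : s ≫ q = 0 := by
    rw [← cancel_mono (kernel.ι d), Category.assoc, hq]; simp [hsds]
  refine ⟨h1, h2, ⟨⟨⟨s, hs⟩⟩⟩, X.right, kernel d, h1, key2 _ _ _ _ hkq h2, ⟨?_⟩⟩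
  let e : X.left ≅ F.obj X.right ⊞ kernel d :=
    { hom := biprod.lift d q
      inv := biprod.desc s (kernel.ι d)
      hom_inv_id := by rw [biprod.lift_desc, hq]; abel
      inv_hom_id := by
        apply biprod.hom_ext' <;> apply biprod.hom_ext <;> simp [hs, hkq, hsq] }
  exact Comma.isoMk e (Iso.refl _) (by simp [e, d, cofreeComodule])
end

section
/- Assume F₁₂ preserves injective objects. Then for every object X = (X₂, X₁, d_X) of the comma category K = Comma(𝟭_{A₂}, F₁₂) and every natural number d, if X₁ has injective dimension ≤ d in A₁ and X₂ has injective dimension ≤ d in A₂, then X has injective dimension ≤ d + 1 in K. -/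
/-!
STATEMENT 5: Assume `F₁₂` preserves injective objects. Then for every object
`X = (X₂, X₁, d_X)` of `K = Comma(𝟭 A₂, F₁₂)` and every `d : ℕ`, if `X₁` has injective
dimension ≤ d in `A₁` and `X₂` has injective dimension ≤ d in `A₂`, then `X` has
injective dimension ≤ d + 1 in `K`.  (`K` is abelian; we record this provable fact
as an instance hypothesis.)
-/

open CategoryTheory Limits

universe w v₁ v₂ u₁ u₂

/-- `InjDimLE d X` : the object `X` of an abelian category has injective dimension
`≤ d`, i.e. there is an exact sequence `0 → X → E⁰ → ⋯ → E^d → 0` with all `Eⁱ`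
injective; formulated by recursion: for `d = 0` this means `X` is injective, and for
`d+1` it means `X` embeds in an injective `E` with `coker(X ⟶ E)` of dimension `≤ d`. -/
def InjDimLE {C : Type w} [Category C] [Abelian C] : ℕ → C → Prop
  | 0, X => Injective X
  | (d + 1), X => ∃ (E : C) (f : X ⟶ E), Injective E ∧ Mono f ∧ InjDimLE d (cokernel f)

theorem shortExact_coker {C : Type*} [Category C] [Abelian C] {X Y : C} (f : X ⟶ Y) [Mono f] :
    (ShortComplex.mk _ _ (cokernel.condition f)).ShortExact where
  exact := ShortComplex.exact_cokernel f
  mono_f := inferInstance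
  epi_g := by dsimp; infer_instance

theorem InjDimLE.hasDim {C : Type*} [Category C] [Abelian C] (d : ℕ) :
    ∀ (X : C), InjDimLE d X → HasInjectiveDimensionLT X (d + 1) := by
  induction d with
  | zero =>
    intro X h
    have : Injective X := h
    exact injective_iff_hasInjectiveDimensionLT_one.1 this
  | succ d ih =>
    rintro X ⟨E, f, hE, hf, h⟩
    exact ((shortExact_coker f).hasInjectiveDimensionLT_X₃_iff d hE).1 (ih _ h)

theorem hasDim_coker {C : Type*} [Category C] [Abelian C] {X E : C} (f : X ⟶ E) [Mono f]
    (hE : Injective E) (n : ℕ) (h : HasInjectiveDimensionLT X (n + 2)) :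
    HasInjectiveDimensionLT (cokernel f) (n + 1) :=
  ((shortExact_coker f).hasInjectiveDimensionLT_X₃_iff n hE).2 h

section

variable {A₁ : Type u₁} [Category.{v₁} A₁] [Abelian A₁]
    {A₂ : Type u₂} [Category.{v₂} A₂] [Abelian A₂] (F : A₁ ⥤ A₂)

theorem comma_fst_mono [PreservesFiniteLimits F] {X Y : Comma (𝟭 A₂) F} (f : X ⟶ Y) [Mono f] :
    Mono f.left := by
  have : PreservesLimitsOfShape WalkingCospan (Comma.fst (𝟭 A₂) F) :=
    { preservesLimit := preservesLimit_of_preserves_limit_cone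
        (Comma.coneOfPreservesIsLimit _ (limit.isLimit _) (limit.isLimit _)) (limit.isLimit _) }
  exact inferInstanceAs (Mono ((Comma.fst (𝟭 A₂) F).map f))

theorem comma_snd_mono [PreservesFiniteLimits F] {X Y : Comma (𝟭 A₂) F} (f : X ⟶ Y) [Mono f] :
    Mono f.right := by
  have : PreservesLimitsOfShape WalkingCospan (Comma.snd (𝟭 A₂) F) :=
    { preservesLimit := preservesLimit_of_preserves_limit_cone
        (Comma.coneOfPreservesIsLimit _ (limit.isLimit _) (limit.isLimit _)) (limit.isLimit _) }
  exact inferInstanceAs (Mono ((Comma.snd (𝟭 A₂) F).map f))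

/-- The object `(F E ⊞ I, E, fst)`. -/
noncomputable def commaInj (E : A₁) (I : A₂) : Comma (𝟭 A₂) F where
  left := F.obj E ⊞ I
  right := E
  hom := (biprod.fst : F.obj E ⊞ I ⟶ F.obj E)

theorem commaInj_injective [PreservesFiniteLimits F] (E : A₁) (I : A₂) [Injective E]
    [Injective I] : Injective (commaInj F E I) where
  factors {X Y} g f _ := by
    have := comma_fst_mono F f
    have := comma_snd_mono F f
    let gl : X.left ⟶ F.obj E ⊞ I := g.left
    let gr : X.right ⟶ E := g.right
    have gw : gl ≫ biprod.fst = X.hom ≫ F.map gr := g.w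
    have fw : f.left ≫ Y.hom = X.hom ≫ F.map f.right := f.w
    let r : Y.right ⟶ E := Injective.factorThru gr f.right
    have hr : f.right ≫ r = gr := Injective.comp_factorThru _ _
    let l : Y.left ⟶ I := Injective.factorThru (gl ≫ biprod.snd) f.left
    have hl : f.left ≫ l = gl ≫ biprod.snd := Injective.comp_factorThru _ _
    let hom : Y.left ⟶ F.obj Y.right := Y.hom
    refine ⟨{ left := (biprod.lift (hom ≫ F.map r) l : Y.left ⟶ F.obj E ⊞ I)
              right := r
              w := (biprod.lift_fst _ _ : _ = hom ≫ F.map r) }, ?_⟩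
    refine CommaMorphism.ext ?_ hr
    change f.left ≫ biprod.lift (hom ≫ F.map r) l = gl
    apply biprod.hom_ext
    · rw [Category.assoc, biprod.lift_fst, gw, ← hr, F.map_comp]
      exact (Category.assoc _ _ _).symm.trans ((congrArg (· ≫ F.map r) fw).trans
        (Category.assoc _ _ _))
    · rw [Category.assoc, biprod.lift_snd, hl]

theorem comma_injective_of_isZero [PreservesFiniteLimits F] (J : Comma (𝟭 A₂) F)
    (h₁ : IsZero J.right) (h₂ : Injective J.left) : Injective J where
  factors {X Y} g f _ := by
    have := comma_fst_mono F f
    have hz : IsZero (F.obj J.right) := by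
      have : F.PreservesZeroMorphisms := inferInstance
      exact F.map_isZero h₁
    exact ⟨{ left := Injective.factorThru g.left f.left
             right := h₁.from_ _
             w := hz.eq_of_tgt _ _ },
      CommaMorphism.ext (Injective.comp_factorThru _ _) (h₁.eq_of_tgt _ _)⟩

variable [Abelian (Comma (𝟭 A₂) F)]

theorem comma_coker_left {X Y : Comma (𝟭 A₂) F} (f : X ⟶ Y) :
    Nonempty (cokernel f.left ≅ (cokernel f).left) :=
  ⟨(PreservesCokernel.iso (Comma.fst (𝟭 A₂) F) f).symm⟩

theorem comma_coker_right {X Y : Comma (𝟭 A₂) F} (f : X ⟶ Y) :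
    Nonempty (cokernel f.right ≅ (cokernel f).right) :=
  ⟨(PreservesCokernel.iso (Comma.snd (𝟭 A₂) F) f).symm⟩

/-- The morphism from `X` to `(F E ⊞ I, E, fst)`. -/
noncomputable def toCommaInj (X : Comma (𝟭 A₂) F) {E : A₁} {I : A₂} (e : X.right ⟶ E)
    (i : X.left ⟶ I) : X ⟶ commaInj F E I where
  left := (biprod.lift ((X.hom : X.left ⟶ F.obj X.right) ≫ F.map e) i : X.left ⟶ F.obj E ⊞ I)
  right := e
  w := (biprod.lift_fst _ _ : _ = (X.hom : X.left ⟶ F.obj X.right) ≫ F.map e)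

theorem toCommaInj_left_mono (X : Comma (𝟭 A₂) F) {E : A₁} {I : A₂} (e : X.right ⟶ E)
    (i : X.left ⟶ I) [Mono i] : Mono (toCommaInj F X e i).left := by
  have : Mono ((biprod.lift ((X.hom : X.left ⟶ F.obj X.right) ≫ F.map e) i) ≫ biprod.snd) := by
    rw [biprod.lift_snd]; infer_instance
  exact mono_of_mono (biprod.lift ((X.hom : X.left ⟶ F.obj X.right) ≫ F.map e) i) biprod.snd

theorem toCommaInj_mono (X : Comma (𝟭 A₂) F) {E : A₁} {I : A₂} (e : X.right ⟶ E)
    (i : X.left ⟶ I) [Mono e] [Mono i] : Mono (toCommaInj F X e i) where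
  right_cancellation a b h := by
    have := toCommaInj_left_mono F X e i
    refine CommaMorphism.ext ?_ ?_
    · exact (cancel_mono (toCommaInj F X e i).left).1 (congrArg CommaMorphism.left h)
    · exact (cancel_mono e).1 (congrArg CommaMorphism.right h)

theorem comma_main [EnoughInjectives A₁] [EnoughInjectives A₂] [PreservesFiniteLimits F]
    (hF : ∀ E : A₁, Injective E → Injective (F.obj E)) (d : ℕ) :
    ∀ X : Comma (𝟭 A₂) F, HasInjectiveDimensionLT X.right (d + 1) →
      HasInjectiveDimensionLT X.left (d + 1) → InjDimLE (d + 1) X := by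
  induction d with
  | zero =>
    intro X h₁ h₂
    have i₁ : Injective X.right := injective_iff_hasInjectiveDimensionLT_one.2 h₁
    have i₂ : Injective X.left := injective_iff_hasInjectiveDimensionLT_one.2 h₂
    have := hF _ i₁
    have i₃ : Injective (commaInj F X.right X.left).left :=
      inferInstanceAs (Injective (F.obj X.right ⊞ X.left))
    have := toCommaInj_left_mono F X (𝟙 X.right) (𝟙 X.left)
    refine ⟨commaInj F X.right X.left, toCommaInj F X (𝟙 _) (𝟙 _), commaInj_injective F _ _,
      toCommaInj_mono F X _ _, comma_injective_of_isZero F _ ?_ ?_⟩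
    · obtain ⟨e⟩ := comma_coker_right F (toCommaInj F X (𝟙 X.right) (𝟙 X.left))
      have hz : IsZero (cokernel (𝟙 X.right)) := isZero_cokernel_of_epi _
      exact hz.of_iso e.symm
    · obtain ⟨e⟩ := comma_coker_left F (toCommaInj F X (𝟙 X.right) (𝟙 X.left))
      have := hasDim_coker (toCommaInj F X (𝟙 X.right) (𝟙 X.left)).left i₃ 0
        (hasInjectiveDimensionLT_of_ge _ 1 _ (by omega))
      exact Injective.of_iso e (injective_iff_hasInjectiveDimensionLT_one.2 this)
  | succ d ih =>
    intro X h₁ h₂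
    let E := Injective.under X.right
    let I := Injective.under X.left
    have := hF E inferInstance
    have i₃ : Injective (commaInj F E I).left := inferInstanceAs (Injective (F.obj E ⊞ I))
    let f := toCommaInj F X (Injective.ι X.right) (Injective.ι X.left)
    have : Mono f.left := toCommaInj_left_mono F X _ _
    have i₄ : Mono f.right := inferInstanceAs (Mono (Injective.ι X.right))
    refine ⟨commaInj F E I, f, commaInj_injective F _ _, toCommaInj_mono F X _ _, ih _ ?_ ?_⟩
    · obtain ⟨e⟩ := comma_coker_right F f
      have := hasDim_coker f.right (inferInstanceAs (Injective E)) d h₁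
      exact hasInjectiveDimensionLT_of_iso e _
    · obtain ⟨e⟩ := comma_coker_left F f
      have := hasDim_coker f.left i₃ d h₂
      exact hasInjectiveDimensionLT_of_iso e _

end

theorem stmt_5 {A₁ : Type u₁} [Category.{v₁} A₁] [Abelian A₁] [EnoughInjectives A₁]
    {A₂ : Type u₂} [Category.{v₂} A₂] [Abelian A₂] [EnoughInjectives A₂]
    (F : A₁ ⥤ A₂) [F.Additive] [PreservesFiniteLimits F]
    [Abelian (Comma (𝟭 A₂) F)]
    (hF : ∀ E : A₁, Injective E → Injective (F.obj E))
    (X : Comma (𝟭 A₂) F) (d : ℕ)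
    (h₁ : InjDimLE d X.right) (h₂ : InjDimLE d X.left) :
    InjDimLE (d + 1) X := by
  exact comma_main F hF d X (h₁.hasDim d) (h₂.hasDim d)
end

section
/- Assume F₁₂ preserves injective objects, and let K = Comma(𝟭_{A₂}, F₁₂). Then: (i) if there is d such that every object of A₁ and every object of A₂ has injective dimension ≤ d, then every object of K has injective dimension ≤ d + 1; and (ii) if every object of K has injective dimension ≤ d, then every object of A₁ and every object of A₂ has injective dimension ≤ d. In other words, gl.dim(K) ≤ max{gl.dim(A₁), gl.dim(A₂)} + 1 ≤ gl.dim(K) + 1, where gl.dim denotes the supremum of injective dimensions of objects. -/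
/-!
STATEMENT 6: Assume `F₁₂` preserves injective objects and let `K = Comma(𝟭 A₂, F₁₂)`.
Then (i) if every object of `A₁` and of `A₂` has injective dimension ≤ d, every object
of `K` has injective dimension ≤ d + 1; and (ii) if every object of `K` has injective
dimension ≤ d, then every object of `A₁` and of `A₂` has injective dimension ≤ d.
(That is, gl.dim K ≤ max{gl.dim A₁, gl.dim A₂} + 1 ≤ gl.dim K + 1.)
-/

open CategoryTheory Limits

universe w v₁ v₂ u₁ u₂

namespace Stmt6Aux

open ZeroObject

section General

variable {C : Type u₁} [Category.{v₁} C] [Abelian C]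

lemma hasInjDim_of_injDimLE : ∀ (d : ℕ) (X : C), InjDimLE d X → HasInjectiveDimensionLT X (d + 1)
  | 0, X, h => by
    have : Injective X := h
    infer_instance
  | d + 1, X, ⟨E, f, hE, hf, h⟩ => by
    have h' := hasInjDim_of_injDimLE d _ h
    have hS : (ShortComplex.mk f (cokernel.π f) (by simp)).ShortExact :=
      { exact := ShortComplex.exact_cokernel f }
    exact (hS.hasInjectiveDimensionLT_X₃_iff d hE).1 h'

lemma injDimLE_of_hasInjDim [EnoughInjectives C] :
    ∀ (d : ℕ) (X : C), HasInjectiveDimensionLT X (d + 1) → InjDimLE d X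
  | 0, X, h => injective_iff_hasInjectiveDimensionLT_one.2 h
  | d + 1, X, h => by
    have hS : (ShortComplex.mk (Injective.ι X) (cokernel.π (Injective.ι X)) (by simp)).ShortExact :=
      { exact := ShortComplex.exact_cokernel _ }
    exact ⟨Injective.under X, Injective.ι X, inferInstance, inferInstance,
      injDimLE_of_hasInjDim d _ ((hS.hasInjectiveDimensionLT_X₃_iff d inferInstance).2 h)⟩

lemma hasInjDim_map {D : Type u₂} [Category.{v₂} D] [Abelian D] (G : C ⥤ D)
    [G.PreservesZeroMorphisms] [G.PreservesHomology] [G.PreservesMonomorphisms]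
    [G.PreservesEpimorphisms] (k : ℕ)
    (hG : ∀ E : C, Injective E → HasInjectiveDimensionLT (G.obj E) (k + 1)) :
    ∀ (d : ℕ) (X : C), InjDimLE d X → HasInjectiveDimensionLT (G.obj X) (k + 1 + d)
  | 0, X, h => hG X h
  | d + 1, X, ⟨E, f, hE, hf, h⟩ => by
    have h' := hasInjDim_map G k hG d _ h
    have hS : (ShortComplex.mk f (cokernel.π f) (by simp)).ShortExact :=
      { exact := ShortComplex.exact_cokernel f }
    have hS' := hS.map G
    have h2 := hG E hE
    exact hS'.hasInjectiveDimensionLT_X₁ (k + 1 + d) h'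
      (hasInjectiveDimensionLT_of_ge (G.obj E) (k + 1) _ (by lia))

end General

variable {A₁ : Type u₁} [Category.{v₁} A₁] [Abelian A₁]
    {A₂ : Type u₂} [Category.{v₂} A₂] [Abelian A₂]
    (F : A₁ ⥤ A₂) [F.Additive]

/-- `Y ↦ (0, Y, 0)`. -/
noncomputable def jF : A₁ ⥤ Comma (𝟭 A₂) F where
  obj Y := { left := 0, right := Y, hom := 0 }
  map f := { left := 0, right := f, w := by simp }
  map_id _ := by
    apply Comma.hom_ext
    · exact (isZero_zero A₂).eq_of_src _ _
    · rfl
  map_comp _ _ := by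
    apply Comma.hom_ext
    · exact (isZero_zero A₂).eq_of_src _ _
    · rfl

/-- `Y ↦ (Y, 0, 0)`. -/
noncomputable def iF : A₂ ⥤ Comma (𝟭 A₂) F where
  obj Y := { left := Y, right := 0, hom := 0 }
  map f := { left := f, right := 0, w := by simp }
  map_id _ := by
    apply Comma.hom_ext
    · rfl
    · exact (isZero_zero A₁).eq_of_src _ _
  map_comp _ _ := by
    apply Comma.hom_ext
    · rfl
    · exact (isZero_zero A₁).eq_of_src _ _

/-- `Y ↦ (F Y, Y, 𝟙)`. -/
noncomputable def rF : A₁ ⥤ Comma (𝟭 A₂) F where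
  obj Y := { left := F.obj Y, right := Y, hom := 𝟙 _ }
  map f := { left := F.map f, right := f, w := by simp }

lemma isZero_F0 : IsZero (F.obj 0) := F.map_isZero (isZero_zero A₁)

/-- adjunction -/
noncomputable def jAdj : jF F ⊣ Comma.snd (𝟭 A₂) F :=
  Adjunction.mkOfHomEquiv
    { homEquiv := fun Y X =>
        { toFun := fun f => f.right
          invFun := fun g =>
            { left := 0, right := g, w := (isZero_zero A₂).eq_of_src _ _ }
          left_inv := fun f => by ext; exact (isZero_zero A₂).eq_of_src _ _; rfl
          right_inv := fun g => rfl }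
      homEquiv_naturality_left_symm := fun _ _ => by
        ext; exact (isZero_zero A₂).eq_of_src _ _; rfl
      homEquiv_naturality_right := fun _ _ => rfl }

/-- adjunction -/
noncomputable def iAdj : Comma.fst (𝟭 A₂) F ⊣ iF F :=
  Adjunction.mkOfHomEquiv
    { homEquiv := fun X Y =>
        { toFun := fun g =>
            { left := g, right := 0, w := (isZero_F0 F).eq_of_tgt _ _ }
          invFun := fun f => f.left
          left_inv := fun g => rfl
          right_inv := fun f => by ext; rfl; exact (isZero_zero A₁).eq_of_tgt _ _ }
      homEquiv_naturality_left_symm := fun _ _ => rfl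
      homEquiv_naturality_right := fun _ _ => by
        ext; rfl; exact (isZero_zero A₁).eq_of_tgt _ _ }

/-- adjunction -/
noncomputable def rAdj : Comma.snd (𝟭 A₂) F ⊣ rF F :=
  Adjunction.mkOfHomEquiv
    { homEquiv := fun X Y =>
        { toFun := fun g =>
            { left := X.hom ≫ F.map g, right := g, w := by simp [rF] }
          invFun := fun f => f.right
          left_inv := fun g => rfl
          right_inv := fun f => by
            ext
            · have := f.w
              simp [rF] at this
              exact this.symm
            · rfl }
      homEquiv_naturality_left_symm := fun _ _ => rfl
      homEquiv_naturality_right := fun _ _ => by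
        apply Comma.hom_ext
        · change _ ≫ F.map _ = (_ ≫ F.map _) ≫ F.map _
          rw [F.map_comp, Category.assoc]
        · rfl }

instance : (Comma.snd (𝟭 A₂) F).IsLeftAdjoint := (rAdj F).isLeftAdjoint
instance : (Comma.snd (𝟭 A₂) F).IsRightAdjoint := (jAdj F).isRightAdjoint
instance : (Comma.fst (𝟭 A₂) F).IsLeftAdjoint := (iAdj F).isLeftAdjoint
instance : (iF F).IsRightAdjoint := (iAdj F).isRightAdjoint
instance : (jF F).IsLeftAdjoint := (jAdj F).isLeftAdjoint

lemma mono_of {X Y : Comma (𝟭 A₂) F} (f : X ⟶ Y) [Mono f.left] [Mono f.right] : Mono f :=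
  ⟨fun g h e => by
    ext
    · rw [← cancel_mono f.left]; exact congrArg CommaMorphism.left e
    · rw [← cancel_mono f.right]; exact congrArg CommaMorphism.right e⟩

lemma epi_of {X Y : Comma (𝟭 A₂) F} (f : X ⟶ Y) [Epi f.left] [Epi f.right] : Epi f :=
  ⟨fun g h e => by
    ext
    · rw [← cancel_epi f.left]; exact congrArg CommaMorphism.left e
    · rw [← cancel_epi f.right]; exact congrArg CommaMorphism.right e⟩

instance : (jF F).PreservesMonomorphisms where
  preserves {X Y} f _ := by
    have : Mono ((jF F).map f).left := ⟨fun _ _ _ => (isZero_zero A₂).eq_of_tgt _ _⟩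
    have : Mono ((jF F).map f).right := by dsimp [jF]; infer_instance
    exact mono_of F _

instance : (iF F).PreservesEpimorphisms where
  preserves {X Y} f _ := by
    have : Epi ((iF F).map f).left := by dsimp [iF]; infer_instance
    have : Epi ((iF F).map f).right := ⟨fun _ _ _ => (isZero_zero A₁).eq_of_src _ _⟩
    exact epi_of F _

variable [PreservesFiniteLimits F]

instance mono_left {X Y : Comma (𝟭 A₂) F} (f : X ⟶ Y) [Mono f] : Mono f.left := by
  have h1 : Mono f.right := inferInstanceAs (Mono ((Comma.snd (𝟭 A₂) F).map f))
  refine Preadditive.mono_of_cancel_zero _ fun {Z} g hg => ?_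
  have hz : g ≫ X.hom = 0 := by
    have hw : f.left ≫ Y.hom = X.hom ≫ F.map f.right := f.w
    have : (g ≫ X.hom) ≫ F.map f.right = 0 := by
      rw [Category.assoc, ← hw, reassoc_of% hg, zero_comp]
    exact (cancel_mono (F.map f.right)).1 (by rw [this, zero_comp])
  let a : (iF F).obj Z ⟶ X := { left := g, right := 0, w := by simp [iF]; exact hz }
  let b : (iF F).obj Z ⟶ X := { left := 0, right := 0, w := by simp [iF]; exact zero_comp }
  have : a = b := by
    rw [← cancel_mono f]
    ext
    · simpa [a, b] using! hg
    · simp [a, b]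
  exact congrArg CommaMorphism.left this

instance : (Comma.fst (𝟭 A₂) F).PreservesMonomorphisms where
  preserves f _ := mono_left F f

/-- The standard injectives. -/
noncomputable def bigI (E₁ : A₁) (E₂ : A₂) : Comma (𝟭 A₂) F :=
  { left := F.obj E₁ ⊞ E₂, right := E₁, hom := biprod.fst }

lemma bigI_injective (E₁ : A₁) (E₂ : A₂) [Injective E₁] [Injective E₂] :
    Injective (bigI F E₁ E₂) where
  factors {A B} g f _ := by
    have h1 : Mono f.right := inferInstanceAs (Mono ((Comma.snd (𝟭 A₂) F).map f))
    let g₂ : A.left ⟶ F.obj E₁ ⊞ E₂ := g.left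
    let g₁ : A.right ⟶ E₁ := g.right
    have hg : g₂ ≫ biprod.fst = A.hom ≫ F.map g₁ := g.w
    have hw : f.left ≫ B.hom = A.hom ≫ F.map f.right := f.w
    let h₁ : B.right ⟶ E₁ := Injective.factorThru g₁ f.right
    have e₁ : f.right ≫ h₁ = g₁ := Injective.comp_factorThru _ _
    let h₂ : B.left ⟶ E₂ := Injective.factorThru (g₂ ≫ biprod.snd) f.left
    have e₂ : f.left ≫ h₂ = g₂ ≫ biprod.snd := Injective.comp_factorThru _ _
    let l : B.left ⟶ F.obj E₁ ⊞ E₂ := biprod.lift (B.hom ≫ F.map h₁) h₂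
    have hl : f.left ≫ l = g₂ := by
      apply biprod.hom_ext
      · simp only [l, Category.assoc, biprod.lift_fst]
        rw [reassoc_of% hw, ← F.map_comp, e₁, hg]
      · simp only [l, Category.assoc, biprod.lift_snd, e₂]
    have hll : l ≫ biprod.fst = B.hom ≫ F.map h₁ := biprod.lift_fst _ _
    exact ⟨{ left := l, right := h₁, w := hll }, by
      ext
      · exact hl
      · exact e₁⟩

lemma exists_bigI [EnoughInjectives A₁] [EnoughInjectives A₂] (X : Comma (𝟭 A₂) F) :
    ∃ (f : X ⟶ bigI F (Injective.under X.right) (Injective.under X.left)), Mono f := by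
  let l : X.left ⟶ F.obj (Injective.under X.right) ⊞ Injective.under X.left :=
    biprod.lift (X.hom ≫ F.map (Injective.ι X.right)) (Injective.ι X.left)
  have hl : l ≫ biprod.fst = X.hom ≫ F.map (Injective.ι X.right) := biprod.lift_fst _ _
  have : Mono l := by
    have : Mono (l ≫ biprod.snd) := by
      simp only [l, biprod.lift_snd]; infer_instance
    exact mono_of_mono l biprod.snd
  let f : X ⟶ bigI F (Injective.under X.right) (Injective.under X.left) :=
    { left := l, right := Injective.ι X.right, w := hl }
  have : Mono f.left := this
  have : Mono f.right := inferInstanceAs (Mono (Injective.ι X.right))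
  exact ⟨f, mono_of F f⟩

lemma enough [EnoughInjectives A₁] [EnoughInjectives A₂] :
    EnoughInjectives (Comma (𝟭 A₂) F) where
  presentation X := by
    obtain ⟨f, hf⟩ := exists_bigI F X
    exact ⟨{ J := _, injective := bigI_injective F _ _, f := f }⟩

lemma inj_comp [EnoughInjectives A₁] [EnoughInjectives A₂]
    (hF : ∀ E : A₁, Injective E → Injective (F.obj E))
    (X : Comma (𝟭 A₂) F) [Injective X] : Injective X.left ∧ Injective X.right := by
  obtain ⟨f, hf⟩ := exists_bigI F X
  let r : Retract X (bigI F (Injective.under X.right) (Injective.under X.left)) :=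
    { i := f, r := Injective.factorThru (𝟙 X) f, retract := Injective.comp_factorThru _ _ }
  have := hF (Injective.under X.right) inferInstance
  constructor
  · have : Injective ((Comma.fst (𝟭 A₂) F).obj
        (bigI F (Injective.under X.right) (Injective.under X.left))) :=
      inferInstanceAs (Injective (F.obj (Injective.under X.right) ⊞ Injective.under X.left))
    exact (r.map (Comma.fst (𝟭 A₂) F)).injective
  · have : Injective ((Comma.snd (𝟭 A₂) F).obj
        (bigI F (Injective.under X.right) (Injective.under X.left))) :=
      inferInstanceAs (Injective (Injective.under X.right))
    exact (r.map (Comma.snd (𝟭 A₂) F)).injective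

variable [Abelian (Comma (𝟭 A₂) F)]

instance (priority := 5000) instPreaddK {A₁ : Type u₁} [Category.{v₁} A₁]
    {A₂ : Type u₂} [Category.{v₂} A₂] (F : A₁ ⥤ A₂) [h : Abelian (Comma (𝟭 A₂) F)] :
    Preadditive (Comma (𝟭 A₂) F) := h.toPreadditive

instance (priority := 5000) instZeroK {A₁ : Type u₁} [Category.{v₁} A₁]
    {A₂ : Type u₂} [Category.{v₂} A₂] (F : A₁ ⥤ A₂) [h : Abelian (Comma (𝟭 A₂) F)]
    (X Y : Comma (𝟭 A₂) F) : Zero (X ⟶ Y) := HasZeroMorphisms.zero X Y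

instance : (Comma.fst (𝟭 A₂) F).PreservesHomology :=
  Functor.preservesHomology_of_preservesMonos_and_cokernels _

instance : (Comma.snd (𝟭 A₂) F).PreservesHomology :=
  Functor.preservesHomology_of_preservesMonos_and_cokernels _

instance : (jF F).PreservesHomology :=
  Functor.preservesHomology_of_preservesMonos_and_cokernels _

instance : (iF F).PreservesHomology :=
  Functor.preservesHomology_of_preservesEpis_and_kernels _

/-- The sequence `0 → (0, X₁) → X → (X₂, 0) → 0`. -/
lemma exists_ses (X : Comma (𝟭 A₂) F) :
    ∃ (f : (jF F).obj X.right ⟶ X) (g : X ⟶ (iF F).obj X.left) (w : f ≫ g = 0),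
      (ShortComplex.mk f g w).ShortExact := by
  let f : (jF F).obj X.right ⟶ X :=
    { left := 0, right := 𝟙 X.right, w := (isZero_zero A₂).eq_of_src _ _ }
  let g : X ⟶ (iF F).obj X.left :=
    { left := 𝟙 X.left, right := 0, w := (isZero_F0 F).eq_of_tgt _ _ }
  have w : f ≫ g = 0 := by
    ext
    · exact (isZero_zero A₂).eq_of_src _ _
    · exact (isZero_zero A₁).eq_of_tgt _ _
  have : Mono f.left := ⟨fun _ _ _ => (isZero_zero A₂).eq_of_tgt _ _⟩
  have : Mono f.right := inferInstanceAs (Mono (𝟙 X.right))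
  have : Epi g.left := inferInstanceAs (Epi (𝟙 X.left))
  have : Epi g.right := ⟨fun _ _ _ => (isZero_zero A₁).eq_of_src _ _⟩
  have hf : Mono f := mono_of F f
  have hg : Epi g := epi_of F g
  refine ⟨f, g, w, { exact := ?_, mono_f := hf, epi_g := hg }⟩
  apply ShortComplex.exact_of_f_is_kernel
  refine KernelFork.IsLimit.ofι' (i := f) (w := w) (fun {A} k hk => ?_)
  have hk2 : k.left = 0 := by
    have h := congrArg (Comma.fst (𝟭 A₂) F).map hk
    rw [Functor.map_zero] at h
    have h' : k.left ≫ 𝟙 X.left = 0 := h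
    simpa using h'
  have hw : k.left ≫ X.hom = A.hom ≫ F.map k.right := k.w
  rw [hk2, zero_comp] at hw
  refine ⟨{ left := 0, right := k.right, w := by simpa [jF] using! hw }, ?_⟩
  ext
  · rw [hk2]; exact zero_comp
  · exact Category.comp_id _

end Stmt6Aux

open Stmt6Aux
theorem stmt_6 {A₁ : Type u₁} [Category.{v₁} A₁] [Abelian A₁] [EnoughInjectives A₁]
    {A₂ : Type u₂} [Category.{v₂} A₂] [Abelian A₂] [EnoughInjectives A₂]
    (F : A₁ ⥤ A₂) [F.Additive] [PreservesFiniteLimits F]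
    [Abelian (Comma (𝟭 A₂) F)]
    (hF : ∀ E : A₁, Injective E → Injective (F.obj E)) (d : ℕ) :
    (((∀ X : A₁, InjDimLE d X) ∧ (∀ X : A₂, InjDimLE d X)) →
        ∀ X : Comma (𝟭 A₂) F, InjDimLE (d + 1) X) ∧
      ((∀ X : Comma (𝟭 A₂) F, InjDimLE d X) →
        ((∀ X : A₁, InjDimLE d X) ∧ (∀ X : A₂, InjDimLE d X))) := by
  have := enough F
  constructor
  · rintro ⟨h₁, h₂⟩ X
    apply injDimLE_of_hasInjDim
    have hi : ∀ E : A₂, Injective E → HasInjectiveDimensionLT ((iF F).obj E) (0 + 1) := by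
      intro E _
      have : Injective ((iF F).obj E) := Injective.injective_of_adjoint (iAdj F) E
      infer_instance
    have hj : ∀ E : A₁, Injective E → HasInjectiveDimensionLT ((jF F).obj E) (1 + 1) := by
      intro E _
      obtain ⟨f, g, w, hS⟩ := exists_ses F ((rF F).obj E)
      have hr : Injective ((rF F).obj E) := Injective.injective_of_adjoint (rAdj F) E
      have h3 := hi (F.obj E) (hF E inferInstance)
      exact (hS.hasInjectiveDimensionLT_X₃_iff 0 hr).1 h3
    obtain ⟨f, g, w, hS⟩ := exists_ses F X
    have a := hasInjDim_map (jF F) 1 hj d X.right (h₁ _)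
    have b := hasInjDim_map (iF F) 0 hi d X.left (h₂ _)
    refine hS.hasInjectiveDimensionLT_X₂ (d + 1 + 1) ?_ ?_
    · exact hasInjectiveDimensionLT_of_ge ((jF F).obj X.right) (1 + 1 + d) _ (by lia)
    · exact hasInjectiveDimensionLT_of_ge ((iF F).obj X.left) (0 + 1 + d) _ (by lia)
  · intro h
    constructor
    · intro X
      apply injDimLE_of_hasInjDim
      have a := hasInjDim_map (Comma.snd (𝟭 A₂) F) 0 (fun E _ => by
        have : Injective ((Comma.snd (𝟭 A₂) F).obj E) := (inj_comp F hF E).2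
        infer_instance) d ((jF F).obj X) (h _)
      exact (show 0 + 1 + d = d + 1 by lia) ▸ a
    · intro X
      apply injDimLE_of_hasInjDim
      have a := hasInjDim_map (Comma.fst (𝟭 A₂) F) 0 (fun E _ => by
        have : Injective ((Comma.fst (𝟭 A₂) F).obj E) := (inj_comp F hF E).1
        infer_instance) d ((iF F).obj X) (h _)
      exact (show 0 + 1 + d = d + 1 by lia) ▸ a
end

section
/- The comma category K = Comma(𝟭_{A₂}, F₁₂) is hereditary if and only if the following three conditions hold: (a) F₁₂ sends every injective object of A₁ to an injective object of A₂; (b) A₁ and A₂ are hereditary; (c) for every epimorphism p : E₁ ⟶ E₁' between injective objects of A₁, the morphism F₁₂(p) is a split epimorphism. -/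
/-!
STATEMENT 7: The comma category `K = Comma(𝟭 A₂, F₁₂)` is hereditary if and only if
(a) `F₁₂` preserves injectives, (b) `A₁` and `A₂` are hereditary, and (c) `F₁₂(p)` is
a split epimorphism for every epimorphism `p` between injective objects of `A₁`.
-/

open CategoryTheory Limits

universe v₁ v₂ u₁ u₂

/-- A category is hereditary if for every epimorphism `e : E ⟶ X` with `E` injective,
`X` is also injective. -/
def Hereditary (C : Type*) [CategoryTheory.Category C] : Prop :=
  ∀ ⦃E X : C⦄ (e : E ⟶ X), CategoryTheory.Epi e →
    CategoryTheory.Injective E → CategoryTheory.Injective X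

section Helpers

variable {A₁ : Type u₁} [Category.{v₁} A₁] [Abelian A₁]
    {A₂ : Type u₂} [Category.{v₂} A₂] [Abelian A₂]
    (F : A₁ ⥤ A₂)

/-- Constructor for objects of the comma category. -/
abbrev mkK {X₂ : A₂} {X₁ : A₁} (d : X₂ ⟶ F.obj X₁) : Comma (𝟭 A₂) F :=
  { left := X₂, right := X₁, hom := d }

variable {F}

/-- Constructor for morphisms of the comma category. -/
abbrev homK {X Y : Comma (𝟭 A₂) F} (f₂ : X.left ⟶ Y.left) (f₁ : X.right ⟶ Y.right)
    (w : f₂ ≫ (show Y.left ⟶ F.obj Y.right from Y.hom) =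
      (show X.left ⟶ F.obj X.right from X.hom) ≫ F.map f₁) : X ⟶ Y :=
  { left := f₂, right := f₁, w := w }

lemma wK {X Y : Comma (𝟭 A₂) F} (f : X ⟶ Y) :
    f.left ≫ (show Y.left ⟶ F.obj Y.right from Y.hom) =
      (show X.left ⟶ F.obj X.right from X.hom) ≫ F.map f.right := f.w

lemma mono_of {X Y : Comma (𝟭 A₂) F} (f : X ⟶ Y) (h₂ : Mono f.left) (h₁ : Mono f.right) :
    Mono f := by
  constructor
  intro Z a b hab
  have e₂ : a.left ≫ f.left = b.left ≫ f.left := congrArg CommaMorphism.left hab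
  have e₁ : a.right ≫ f.right = b.right ≫ f.right := congrArg CommaMorphism.right hab
  exact CommaMorphism.ext ((cancel_mono _).1 e₂) ((cancel_mono _).1 e₁)

lemma epi_of {X Y : Comma (𝟭 A₂) F} (f : X ⟶ Y) (h₂ : Epi f.left) (h₁ : Epi f.right) :
    Epi f := by
  constructor
  intro Z a b hab
  have e₂ : f.left ≫ a.left = f.left ≫ b.left := congrArg CommaMorphism.left hab
  have e₁ : f.right ≫ a.right = f.right ≫ b.right := congrArg CommaMorphism.right hab
  exact CommaMorphism.ext ((cancel_epi _).1 e₂) ((cancel_epi _).1 e₁)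

open scoped ZeroObject

lemma mono_right {X Y : Comma (𝟭 A₂) F} (f : X ⟶ Y) (h : Mono f) : Mono f.right := by
  constructor
  intro T a b hab
  let a' : mkK F (0 : (0 : A₂) ⟶ F.obj T) ⟶ X := homK 0 a (by simp)
  let b' : mkK F (0 : (0 : A₂) ⟶ F.obj T) ⟶ X := homK 0 b (by simp)
  have : a' ≫ f = b' ≫ f := CommaMorphism.ext rfl hab
  exact congrArg CommaMorphism.right ((cancel_mono f).1 this)

lemma mono_left [F.Additive] [PreservesFiniteLimits F] {X Y : Comma (𝟭 A₂) F} (f : X ⟶ Y)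
    (h : Mono f) : Mono f.left := by
  have h₁ := mono_right f h
  apply Preadditive.mono_of_cancel_zero
  intro T t ht
  have hd : t ≫ (show X.left ⟶ F.obj X.right from X.hom) = 0 := by
    rw [← cancel_mono (F.map f.right), Category.assoc, ← wK f, reassoc_of% ht]
    simp
  let a' : mkK F (0 : T ⟶ F.obj 0) ⟶ X := homK t 0 (by rw [hd]; simp)
  let b' : mkK F (0 : T ⟶ F.obj 0) ⟶ X := homK 0 0 (by simp)
  have : a' ≫ f = b' ≫ f := by
    refine CommaMorphism.ext ?_ rfl
    change t ≫ f.left = 0 ≫ f.left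
    rw [ht, zero_comp]
  exact congrArg CommaMorphism.left ((cancel_mono f).1 this)

lemma epi_right {X Y : Comma (𝟭 A₂) F} (f : X ⟶ Y) (h : Epi f) : Epi f.right := by
  constructor
  intro T a b hab
  let a' : Y ⟶ mkK F (𝟙 (F.obj T)) :=
    homK ((show Y.left ⟶ F.obj Y.right from Y.hom) ≫ F.map a) a (by simp)
  let b' : Y ⟶ mkK F (𝟙 (F.obj T)) :=
    homK ((show Y.left ⟶ F.obj Y.right from Y.hom) ≫ F.map b) b (by simp)
  have : f ≫ a' = f ≫ b' := by
    refine CommaMorphism.ext ?_ hab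
    change f.left ≫ _ ≫ F.map a = f.left ≫ _ ≫ F.map b
    have := wK f
    rw [reassoc_of% this, reassoc_of% this, ← F.map_comp, ← F.map_comp, hab]
  exact congrArg CommaMorphism.right ((cancel_epi f).1 this)

lemma isZero_F0 [F.Additive] : IsZero (F.obj (0 : A₁)) := F.map_isZero (isZero_zero _)

lemma epi_left [F.Additive] {X Y : Comma (𝟭 A₂) F} (f : X ⟶ Y) (h : Epi f) :
    Epi f.left := by
  constructor
  intro T a b hab
  let a' : Y ⟶ mkK F (0 : T ⟶ F.obj 0) := homK a 0 (isZero_F0.eq_of_tgt _ _)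
  let b' : Y ⟶ mkK F (0 : T ⟶ F.obj 0) := homK b 0 (isZero_F0.eq_of_tgt _ _)
  have : f ≫ a' = f ≫ b' := CommaMorphism.ext hab rfl
  exact congrArg CommaMorphism.left ((cancel_epi f).1 this)

lemma inj_id (E : A₁) (hE : Injective E) : Injective (mkK F (𝟙 (F.obj E))) := by
  constructor
  intro A B g f hf
  have h₁ := mono_right f hf
  let h := Injective.factorThru (J := E) g.right f.right
  have hh : f.right ≫ h = g.right := Injective.comp_factorThru _ _
  refine ⟨homK ((show B.left ⟶ F.obj B.right from B.hom) ≫ F.map h) h (by simp), ?_⟩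
  refine CommaMorphism.ext ?_ hh
  change f.left ≫ _ ≫ F.map h = g.left
  have e := wK f
  have e' := wK g
  rw [reassoc_of% e, ← F.map_comp, hh]
  exact e'.symm.trans (Category.comp_id _)

lemma inj_right (X : Comma (𝟭 A₂) F) (hX : Injective X) : Injective X.right := by
  constructor
  intro A B g f hf
  let f' : mkK F (0 : (0 : A₂) ⟶ F.obj A) ⟶ mkK F (0 : (0 : A₂) ⟶ F.obj B) :=
    homK (𝟙 _) f (by simp)
  have : Mono f' := mono_of _ (inferInstanceAs (Mono (𝟙 _))) hf
  let g' : mkK F (0 : (0 : A₂) ⟶ F.obj A) ⟶ X := homK 0 g (by simp)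
  exact ⟨(Injective.factorThru g' f').right,
    congrArg CommaMorphism.right (Injective.comp_factorThru g' f')⟩

lemma inj_split (X : Comma (𝟭 A₂) F) (hX : Injective X) :
    ∃ s : F.obj X.right ⟶ X.left,
      s ≫ (show X.left ⟶ F.obj X.right from X.hom) = 𝟙 _ := by
  let d : X.left ⟶ F.obj X.right := X.hom
  let Y : Comma (𝟭 A₂) F := mkK F (biprod.snd : X.left ⊞ F.obj X.right ⟶ F.obj X.right)
  let m : X ⟶ Y := homK (biprod.lift (𝟙 _) d) (𝟙 _) (by
    change biprod.lift (𝟙 _) d ≫ biprod.snd = d ≫ F.map (𝟙 _)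
    simp)
  have : Mono m := by
    refine mono_of _ ?_ (inferInstanceAs (Mono (𝟙 _)))
    exact mono_of_mono_fac (biprod.lift_fst (𝟙 _) d)
  let r := Injective.factorThru (𝟙 X) m
  have hr : m ≫ r = 𝟙 X := Injective.comp_factorThru _ _
  have h₁ : r.right = 𝟙 _ := by
    have : 𝟙 X.right ≫ r.right = 𝟙 X.right := congrArg CommaMorphism.right hr
    rw [← this]; exact (Category.id_comp _).symm
  have w : r.left ≫ d = (biprod.snd : X.left ⊞ F.obj X.right ⟶ F.obj X.right) ≫
    F.map r.right := wK r
  refine ⟨biprod.inr ≫ r.left, ?_⟩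
  change (biprod.inr ≫ r.left) ≫ d = _
  rw [Category.assoc, w, h₁]
  erw [F.map_id]
  simp

lemma inj_left (X : Comma (𝟭 A₂) F) (hX : Injective X) (hF : Injective (F.obj X.right)) :
    Injective X.left := by
  constructor
  intro A B g f hf
  let c : A ⟶ F.obj X.right := g ≫ X.hom
  let k : B ⟶ F.obj X.right := Injective.factorThru c f
  have hk : f ≫ k = c := Injective.comp_factorThru _ _
  let f' : mkK F c ⟶ mkK F k := homK f (𝟙 _) (by simp [hk])
  have : Mono f' := mono_of _ hf (inferInstanceAs (Mono (𝟙 _)))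
  let g' : mkK F c ⟶ X := homK g (𝟙 _) (by simp [c])
  exact ⟨(Injective.factorThru g' f').left,
    congrArg CommaMorphism.left (Injective.comp_factorThru g' f')⟩

lemma inj_of [F.Additive] [PreservesFiniteLimits F] (X : Comma (𝟭 A₂) F)
    (h₁ : Injective X.right) (h₂ : Injective X.left) (s : F.obj X.right ⟶ X.left)
    (hs : s ≫ (show X.left ⟶ F.obj X.right from X.hom) = 𝟙 _) : Injective X := by
  constructor
  intro A B g f hf
  have := mono_right f hf
  have := mono_left f hf
  let d : X.left ⟶ F.obj X.right := X.hom
  let dA : A.left ⟶ F.obj A.right := A.hom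
  let dB : B.left ⟶ F.obj B.right := B.hom
  have hs : s ≫ d = 𝟙 _ := hs
  have wf : f.left ≫ dB = dA ≫ F.map f.right := wK f
  have wg : g.left ≫ d = dA ≫ F.map g.right := wK g
  let h : B.right ⟶ X.right := Injective.factorThru g.right f.right
  have hh : f.right ≫ h = g.right := Injective.comp_factorThru _ _
  let k : B.left ⟶ X.left := Injective.factorThru g.left f.left
  have hk : f.left ≫ k = g.left := Injective.comp_factorThru _ _
  refine ⟨homK (k + (dB ≫ F.map h - k ≫ d) ≫ s) h ?_, ?_⟩
  · change (k + (dB ≫ F.map h - k ≫ d) ≫ s) ≫ d = dB ≫ F.map h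
    rw [Preadditive.add_comp, Category.assoc, hs, Category.comp_id]
    abel
  · refine CommaMorphism.ext ?_ hh
    change f.left ≫ (k + (dB ≫ F.map h - k ≫ d) ≫ s) = g.left
    rw [Preadditive.comp_add, ← Category.assoc, Preadditive.comp_sub, reassoc_of% wf,
      ← F.map_comp, hh, reassoc_of% hk, wg, hk]
    simp

end Helpers

open scoped ZeroObject

theorem stmt_7 {A₁ : Type u₁} [Category.{v₁} A₁] [Abelian A₁] [EnoughInjectives A₁]
    {A₂ : Type u₂} [Category.{v₂} A₂] [Abelian A₂] [EnoughInjectives A₂]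
    (F : A₁ ⥤ A₂) [F.Additive] [PreservesFiniteLimits F] :
    Hereditary (Comma (𝟭 A₂) F) ↔
      ((∀ E : A₁, Injective E → Injective (F.obj E)) ∧
        (Hereditary A₁ ∧ Hereditary A₂) ∧
        (∀ (E₁ E₁' : A₁) (p : E₁ ⟶ E₁'), Epi p → Injective E₁ → Injective E₁' →
          IsSplitEpi (F.map p))) := by
  constructor
  · intro H
    have inj0 : ∀ {M : A₂} {d : M ⟶ F.obj 0}, Injective (mkK F d) → Injective M := by
      intro M d h
      exact inj_left _ h (isZero_F0.injective)
    have key : ∀ {E X : A₁} (e : E ⟶ X), Epi e → Injective E →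
        Injective (mkK F (F.map e)) := by
      intro E X e he hE
      let p : mkK F (𝟙 (F.obj E)) ⟶ mkK F (F.map e) := homK (𝟙 _) e (by simp)
      exact H p (epi_of _ (inferInstanceAs (Epi (𝟙 _))) he) (inj_id E hE)
    refine ⟨?_, ⟨?_, ?_⟩, ?_⟩
    · intro E hE
      refine inj0 (key (0 : E ⟶ 0) ?_ hE)
      exact ⟨fun _ _ _ => (isZero_zero A₁).eq_of_src _ _⟩
    · intro E X e he hE
      exact inj_right _ (key e he hE)
    · intro E X e he hE
      let p : mkK F (0 : E ⟶ F.obj 0) ⟶ mkK F (0 : X ⟶ F.obj 0) := homK e (𝟙 _) (by simp)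
      refine inj0 (H p (epi_of _ he (inferInstanceAs (Epi (𝟙 _)))) ?_)
      exact inj_of _ (isZero_zero A₁).injective hE 0 (isZero_F0.eq_of_tgt _ _)
    · intro E X e he hE _
      obtain ⟨s, hs⟩ := inj_split _ (key e he hE)
      exact ⟨⟨⟨s, hs⟩⟩⟩
  · rintro ⟨ha, ⟨h₁, h₂⟩, hc⟩ E X e he hE
    have er := epi_right e he
    have el := epi_left e he
    have iE := inj_right _ hE
    have iX := h₁ e.right er iE
    have iX₂ := h₂ e.left el (inj_left _ hE (ha _ iE))
    obtain ⟨s, hs⟩ := inj_split _ hE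
    obtain ⟨⟨t, ht⟩⟩ := hc _ _ e.right er iE iX
    refine inj_of X iX iX₂ (t ≫ s ≫ e.left) ?_
    rw [Category.assoc, Category.assoc, wK e, reassoc_of% hs, ht]
end

section
/- If the comma category K = Comma(𝟭_{A₂}, F₁₂) is hereditary, then F₁₂ sends every injective object of A₁ to an injective object of A₂. -/
/-!
STATEMENT 9: If the comma category `K = Comma(𝟭 A₂, F₁₂)` is hereditary, then `F₁₂`
sends every injective object of `A₁` to an injective object of `A₂`.
-/

open CategoryTheory Limits

universe v₁ v₂ u₁ u₂

open scoped ZeroObject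

theorem stmt_9 {A₁ : Type u₁} [Category.{v₁} A₁] [Abelian A₁] [EnoughInjectives A₁]
    {A₂ : Type u₂} [Category.{v₂} A₂] [Abelian A₂] [EnoughInjectives A₂]
    (F : A₁ ⥤ A₂) [F.Additive] [PreservesFiniteLimits F]
    (hK : Hereditary (Comma (𝟭 A₂) F)) :
    ∀ E : A₁, Injective E → Injective (F.obj E) := by
  intro E hE
  have hF0 : IsZero (F.obj (0 : A₁)) := F.map_isZero (isZero_zero A₁)
  have hI : Injective (Comma.mk (L := 𝟭 A₂) (R := F) (F.obj E) E (𝟙 (F.obj E))) := by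
    constructor
    intro X Y g f hf
    have hm : Mono f.right := by
      constructor
      intro Z a b hab
      have h : ∀ c : Z ⟶ X.right,
          (𝟭 A₂).map (0 : (0 : A₂) ⟶ X.left) ≫ X.hom =
            (0 : (𝟭 A₂).obj (0 : A₂) ⟶ F.obj Z) ≫ F.map c := by
        intro c
        simp
      let aK : Comma.mk (L := 𝟭 A₂) (R := F) (0 : A₂) Z 0 ⟶ X :=
        { left := 0, right := a, w := h a }
      let bK : Comma.mk (L := 𝟭 A₂) (R := F) (0 : A₂) Z 0 ⟶ X :=
        { left := 0, right := b, w := h b }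
      have habK : aK = bK := by
        rw [← cancel_mono f]
        apply CommaMorphism.ext
        · exact (isZero_zero A₂).eq_of_src _ _
        · exact hab
      exact congrArg CommaMorphism.right habK
    let r : Y.right ⟶ E := Injective.factorThru g.right f.right
    have hr : f.right ≫ r = g.right := Injective.comp_factorThru _ _
    have hg := g.w
    have hfw := f.w
    refine ⟨{ left := Y.hom ≫ F.map r, right := r, w := ?_ }, ?_⟩
    · exact Category.comp_id _
    · apply CommaMorphism.ext
      · change f.left ≫ Y.hom ≫ F.map r = g.left
        change f.left ≫ Y.hom = X.hom ≫ F.map f.right at hfw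
        change g.left ≫ 𝟙 (F.obj E) = X.hom ≫ F.map g.right at hg
        rw [Category.comp_id] at hg
        rw [← Category.assoc, hfw, Category.assoc, ← F.map_comp, hr, hg]
      · exact hr
  let e : Comma.mk (L := 𝟭 A₂) (R := F) (F.obj E) E (𝟙 (F.obj E)) ⟶
      Comma.mk (L := 𝟭 A₂) (R := F) (F.obj E) (0 : A₁) 0 :=
    { left := 𝟙 (F.obj E), right := 0, w := hF0.eq_of_tgt _ _ }
  have he : Epi e := by
    constructor
    intro Z a b hab
    apply CommaMorphism.ext
    · have h : 𝟙 (F.obj E) ≫ a.left = 𝟙 (F.obj E) ≫ b.left :=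
        congrArg CommaMorphism.left hab
      exact (cancel_epi (𝟙 (F.obj E))).1 h
    · exact (isZero_zero A₁).eq_of_src _ _
  have hQ := hK e he hI
  constructor
  intro X Y g f hf
  let fK : Comma.mk (L := 𝟭 A₂) (R := F) X (0 : A₁) 0 ⟶
      Comma.mk (L := 𝟭 A₂) (R := F) Y (0 : A₁) 0 :=
    { left := f, right := 0, w := hF0.eq_of_tgt _ _ }
  let gK : Comma.mk (L := 𝟭 A₂) (R := F) X (0 : A₁) 0 ⟶
      Comma.mk (L := 𝟭 A₂) (R := F) (F.obj E) (0 : A₁) 0 :=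
    { left := g, right := 0, w := hF0.eq_of_tgt _ _ }
  have hfK : Mono fK := by
    constructor
    intro Z a b hab
    apply CommaMorphism.ext
    · have h : a.left ≫ f = b.left ≫ f := congrArg CommaMorphism.left hab
      exact (cancel_mono f).1 h
    · exact (isZero_zero A₁).eq_of_tgt _ _
  obtain ⟨k, hk⟩ := hQ.factors gK fK
  exact ⟨k.left, congrArg CommaMorphism.left hk⟩
end

section
/- If the comma category K = Comma(𝟭_{A₂}, F₁₂) is hereditary, then for every epimorphism p : E₁ ⟶ E₁' between injective objects of A₁, the morphism F₁₂(p) : F₁₂(E₁) ⟶ F₁₂(E₁') is a split epimorphism. -/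
/-!
STATEMENT 10: If the comma category `K = Comma(𝟭 A₂, F₁₂)` is hereditary, then for
every epimorphism `p : E₁ ⟶ E₁'` between injective objects of `A₁`, the morphism
`F₁₂(p)` is a split epimorphism.
-/

open CategoryTheory Limits

universe v₁ v₂ u₁ u₂

theorem stmt_10 {A₁ : Type u₁} [Category.{v₁} A₁] [Abelian A₁] [EnoughInjectives A₁]
    {A₂ : Type u₂} [Category.{v₂} A₂] [Abelian A₂] [EnoughInjectives A₂]
    (F : A₁ ⥤ A₂) [F.Additive] [PreservesFiniteLimits F]
    (hK : Hereditary (Comma (𝟭 A₂) F)) :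
    ∀ (E₁ E₁' : A₁) (p : E₁ ⟶ E₁'), Epi p → Injective E₁ → Injective E₁' →
      IsSplitEpi (F.map p) := by
  intro E₁ E₁' p hp hE _
  let P : Comma (𝟭 A₂) F := ⟨F.obj E₁, E₁, 𝟙 (F.obj E₁)⟩
  let X : Comma (𝟭 A₂) F := ⟨F.obj E₁, E₁', F.map p⟩
  let Q : Comma (𝟭 A₂) F := ⟨F.obj E₁', E₁', 𝟙 (F.obj E₁')⟩
  let Z : A₁ → Comma (𝟭 A₂) F := fun W => ⟨⊥_ A₂, W, initial.to (F.obj W)⟩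
  have lift : ∀ (Y : Comma (𝟭 A₂) F) (W : A₁) (a : W ⟶ Y.right),
      ∃ f : Z W ⟶ Y, f.right = a := fun Y W a =>
    ⟨{ left := initial.to Y.left, right := a, w := initialIsInitial.hom_ext _ _ }, rfl⟩
  have hext : ∀ (Y : Comma (𝟭 A₂) F) (W : A₁) (f g : Z W ⟶ Y), f.right = g.right → f = g := by
    intro Y W f g h
    exact CommaMorphism.ext (initialIsInitial.hom_ext _ _) h
  have hP : Injective P := by
    constructor
    intro Y T g f hf
    have hm : Mono f.right := by
      constructor
      intro W a b hab
      obtain ⟨a', ha⟩ := lift Y W a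
      obtain ⟨b', hb⟩ := lift Y W b
      have h : a' ≫ f = b' ≫ f := by
        apply hext
        simp only [Comma.comp_right, ha, hb, hab]
      rw [← ha, ← hb, (cancel_mono f).1 h]
    let r : Y.right ⟶ E₁ := g.right
    let k : T.right ⟶ E₁ := Injective.factorThru r f.right
    have hk : f.right ≫ k = g.right := Injective.comp_factorThru r f.right
    have hg : g.left = Y.hom ≫ F.map g.right := by
      have := g.w
      simpa [P] using this
    have hfw : f.left ≫ T.hom = Y.hom ≫ F.map f.right := by simpa using f.w
    refine ⟨{ left := T.hom ≫ F.map k, right := k, w := by simp [P] }, ?_⟩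
    refine CommaMorphism.ext ?_ hk
    change f.left ≫ T.hom ≫ F.map k = g.left
    rw [hg, ← hk, F.map_comp, ← Category.assoc, hfw, Category.assoc]
  let e : P ⟶ X := { left := 𝟙 (F.obj E₁), right := p, w := by simp [P, X] }
  have he : Epi e := by
    constructor
    intro Y a b hab
    have h1 := congrArg CommaMorphism.left hab
    have h2 := congrArg CommaMorphism.right hab
    refine CommaMorphism.ext ?_ ?_
    · change 𝟙 (F.obj E₁) ≫ a.left = 𝟙 (F.obj E₁) ≫ b.left at h1
      rwa [Category.id_comp, Category.id_comp] at h1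
    · exact (cancel_epi p).1 h2
  have hX : Injective X := hK e he hP
  obtain ⟨i, hi⟩ := lift Q E₁' (𝟙 E₁')
  obtain ⟨j, hj⟩ := lift X E₁' (𝟙 E₁')
  have him : Mono i := by
    constructor
    intro Y a b hab
    have h2 := congrArg CommaMorphism.right hab
    simp only [Comma.comp_right, hi] at h2
    have hz : IsZero (⊥_ A₂) := (isZero_zero A₂).of_iso
      (initialIsInitial.uniqueUpToIso (isZero_zero A₂).isInitial)
    refine CommaMorphism.ext (hz.eq_of_tgt _ _) ?_
    exact (cancel_mono (𝟙 E₁')).1 h2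
  obtain ⟨s, hs⟩ := hX.factors j i
  have hr : s.right = 𝟙 E₁' := by
    have h2 := congrArg CommaMorphism.right hs
    rw [Comma.comp_right, hi, hj] at h2
    exact (Category.id_comp (s.right : E₁' ⟶ E₁')).symm.trans h2
  have hw : s.left ≫ F.map p = 𝟙 (F.obj E₁') ≫ F.map s.right := s.w
  rw [hr] at hw
  refine ⟨⟨⟨s.left, ?_⟩⟩⟩
  exact hw.trans (by simp [X, Q])
end
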